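/- arXiv:2208.02359 — 2 statements merged into one kernel-verified Lean document; each statement's English description precedes it below -/
import Mathlib

section
/- Assume the Riemann Hypothesis. For all τ ≥ 2 and x ≥ 2, Σ_γ ( sin(½(γ−τ) log x) / (½(γ−τ) log x) )² = (log(τ/2π))/log x − (2/log x) Σ_{n≤x} Λ(n) n^{−1/2} (1 − (log n)/(log x)) cos(τ log n) + O(1/(τ log x)) + O(x^{1/2}/(τ log x)²), where the sum on the left runs over all ordinates γ ∈ ℝ of nontrivial zeros 1/2+iγ of ζ counted with multiplicity, and the implied constants are absolute. -/
open Filter MeasureTheory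
open scoped Real

noncomputable section

/-- The multiplicity (order of vanishing) of the Riemann zeta function at a point `z`:
the least `n` such that the `n`-th derivative of `ζ` at `z` is nonzero. -/
def zetaMult (z : ℂ) : ℕ := sInf {n : ℕ | iteratedDeriv n riemannZeta z ≠ 0}

/-- Under RH, the set of ordinates `γ` with `0 < γ ≤ T` of nontrivial zeros `1/2 + iγ` of `ζ`. -/
def zetaOrds (T : ℝ) : Set ℝ :=
  {γ : ℝ | 0 < γ ∧ γ ≤ T ∧ riemannZeta (1 / 2 + γ * Complex.I) = 0}

/-- The multiplicity of the zero of `ζ` at `1/2 + iγ`. -/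
def ordMult (γ : ℝ) : ℕ := zetaMult (1 / 2 + γ * Complex.I)

/-- `N(T)`: the number of ordinates of nontrivial zeros in `(0, T]`, counted with multiplicity. -/
def zetaN (T : ℝ) : ℕ := ∑ᶠ γ ∈ zetaOrds T, ordMult γ

/-- The next ordinate of a nontrivial zero strictly above `γ`. -/
def nextOrd (γ : ℝ) : ℝ :=
  sInf {γ' : ℝ | γ < γ' ∧ riemannZeta (1 / 2 + γ' * Complex.I) = 0}

/-- The set of all real ordinates of nontrivial zeros of `ζ` (under RH). -/
def allOrds : Set ℝ := {γ : ℝ | riemannZeta (1 / 2 + γ * Complex.I) = 0}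

/-- `(sin u / u)²`, interpreted as `1` at `u = 0`. -/
def sincSq (u : ℝ) : ℝ := if u = 0 then 1 else (Real.sin u / u) ^ 2

lemma hd_step (f : ℂ → ℂ) (hf : Differentiable ℂ f) (p : ℂ) (n : ℕ)
    (hn : analyticOrderAt f p = n) :
    ∃ g : ℂ → ℂ, Differentiable ℂ g ∧ g p ≠ 0 ∧ ∀ z, f z = (z - p) ^ n * g z := by
  obtain ⟨g, hg, hgp, hfg⟩ := (hf.analyticAt p).analyticOrderAt_eq_natCast.mp hn
  classical
  let G : ℂ → ℂ := Function.update (fun z => f z / (z - p) ^ n) p (g p)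
  have hGp : G p = g p := by simp [G]
  have hGne : ∀ z, z ≠ p → G z = f z / (z - p) ^ n := fun z hz => by simp [G, hz]
  have hGg : G =ᶠ[nhds p] g := by
    filter_upwards [hfg] with z hz
    by_cases h : z = p
    · rw [h, hGp]
    · rw [hGne z h, hz, smul_eq_mul, mul_div_cancel_left₀]
      exact pow_ne_zero _ (sub_ne_zero.mpr h)
  refine ⟨G, fun z => ?_, by rwa [hGp], fun z => ?_⟩
  · by_cases h : z = p
    · rw [h]; exact (hg.differentiableAt).congr_of_eventuallyEq hGg
    · have : G =ᶠ[nhds z] fun z => f z / (z - p) ^ n := by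
        filter_upwards [isOpen_ne.mem_nhds h] with w hw using hGne w hw
      refine DifferentiableAt.congr_of_eventuallyEq ?_ this
      exact (hf z).div (by fun_prop) (pow_ne_zero _ (sub_ne_zero.mpr h))
  · by_cases h : z = p
    · rw [h, hGp]
      have := hfg.self_of_nhds
      simpa using this
    · rw [hGne z h, mul_div_cancel₀]
      exact pow_ne_zero _ (sub_ne_zero.mpr h)

lemma hd_factor (f : ℂ → ℂ) (hf : Differentiable ℂ f) (hord : ∀ p, analyticOrderAt f p ≠ ⊤)
    (S : Finset ℂ) :
    ∃ g : ℂ → ℂ, Differentiable ℂ g ∧ (∀ p ∈ S, g p ≠ 0) ∧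
      ∀ z, f z = (∏ p ∈ S, (z - p) ^ analyticOrderNatAt f p) * g z := by
  classical
  induction S using Finset.induction_on with
  | empty => exact ⟨f, hf, by simp, by simp⟩
  | insert p S hp ih =>
    obtain ⟨g, hg, hgS, hfg⟩ := ih
    have hPd : Differentiable ℂ (fun z => ∏ q ∈ S, (z - q) ^ analyticOrderNatAt f q) := by
      fun_prop
    have hPp : (∏ q ∈ S, (p - q) ^ analyticOrderNatAt f q) ≠ 0 := by
      refine Finset.prod_ne_zero_iff.mpr fun q hq => pow_ne_zero _ (sub_ne_zero.mpr ?_)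
      rintro rfl; exact hp hq
    have hfe : f = (fun z => ∏ q ∈ S, (z - q) ^ analyticOrderNatAt f q) * g := funext hfg
    have h1 : analyticOrderAt f p = analyticOrderAt g p := by
      conv_lhs => rw [hfe]
      rw [analyticOrderAt_mul (hPd.analyticAt p) (hg.analyticAt p),
        (hPd.analyticAt p).analyticOrderAt_eq_zero.mpr hPp, zero_add]
    obtain ⟨g', hg', hg'p, hgg'⟩ := hd_step g hg p (analyticOrderNatAt f p)
      (by rw [← h1, Nat.cast_analyticOrderNatAt (hord p)])
    refine ⟨g', hg', fun q hq => ?_, fun z => ?_⟩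
    · rcases Finset.mem_insert.mp hq with rfl | hq
      · exact hg'p
      · have := hgS q hq
        rw [hgg'] at this
        exact right_ne_zero_of_mul this
    · rw [hfg, hgg', Finset.prod_insert hp]; ring

lemma hd_log (g : ℂ → ℂ) (hg : Differentiable ℂ g) (R : ℝ) (hR : 0 < R)
    (hne : ∀ z ∈ Metric.ball (0 : ℂ) R, g z ≠ 0) (M : ℝ) (hM : 0 < M)
    (hb : ∀ z ∈ Metric.ball (0 : ℂ) R, ‖g z‖ ≤ Real.exp M * ‖g 0‖) (z : ℂ) (hz : ‖z‖ < R / 4) :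
    ‖logDeriv g z - logDeriv g 0‖ ≤ 64 * M / R ^ 2 * ‖z‖ := by
  have h0 : (0 : ℂ) ∈ Metric.ball (0 : ℂ) R := by simpa using hR
  have hd : DifferentiableOn ℂ (logDeriv g) (Metric.ball 0 R) := by
    intro w hw
    have : DifferentiableAt ℂ (deriv g) w := (hg.analyticAt w).deriv.differentiableAt
    exact (this.div (hg w) (hne w hw)).differentiableWithinAt
  obtain ⟨φ₀, hφ₀⟩ := hd.isExactOn_ball
  set φ : ℂ → ℂ := fun w => φ₀ w - φ₀ 0 with hφdef
  have hφ : ∀ w ∈ Metric.ball (0 : ℂ) R, HasDerivAt φ (logDeriv g w) w := fun w hw =>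
    (hφ₀ w hw).sub_const _
  have hφ0 : φ 0 = 0 := by simp [φ]
  have hexp : ∀ w ∈ Metric.ball (0 : ℂ) R, g w * Complex.exp (-φ w) = g 0 := by
    intro w hw
    have hder : ∀ v ∈ Metric.ball (0 : ℂ) R,
        HasDerivAt (fun v => g v * Complex.exp (-φ v)) 0 v := by
      intro v hv
      have := ((hg v).hasDerivAt).mul ((hφ v hv).neg.cexp)
      convert! this using 1
      rw [logDeriv_apply]
      field_simp [hne v hv]
      ring
    have := (convex_ball (0 : ℂ) R).is_const_of_fderivWithin_eq_zero (𝕜 := ℂ)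
      (f := fun v => g v * Complex.exp (-φ v))
      (fun v hv => (hder v hv).differentiableAt.differentiableWithinAt) (fun v hv => by
        rw [fderivWithin_of_isOpen Metric.isOpen_ball hv]
        ext
        simpa using (hder v hv).deriv) hw h0
    simpa [hφ0] using this
  have hre : Set.MapsTo φ (Metric.ball 0 R) {z | z.re ≤ M} := by
    intro w hw
    have h1 := hexp w hw
    have h2 : g w = g 0 * Complex.exp (φ w) := by
      rw [← h1, mul_assoc, ← Complex.exp_add]; simp
    have h3 := hb w hw
    rw [h2, norm_mul, Complex.norm_exp, mul_comm] at h3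
    have := le_of_mul_le_mul_right h3 (norm_pos_iff.mpr (hne 0 h0))
    exact Real.exp_le_exp.mp this
  have hBC : ∀ w, ‖w‖ ≤ R / 2 → ‖φ w‖ ≤ 2 * M := by
    intro w hw
    have hwb : w ∈ Metric.ball (0 : ℂ) R := by simp; linarith
    have := Complex.borelCaratheodory_zero hM
      (fun v hv => (hφ v hv).differentiableAt.differentiableWithinAt) hre hR hwb hφ0
    refine this.trans ?_
    rw [div_le_iff₀ (by linarith)]
    nlinarith
  have hder : ∀ w, ‖w‖ < R / 4 → ‖logDeriv g w‖ ≤ 8 * M / R := by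
    intro w hw
    have hsub : Metric.closedBall w (R / 4) ⊆ Metric.ball (0 : ℂ) R := by
      intro v hv
      have h1 : ‖v - w‖ ≤ R / 4 := by simpa [dist_eq_norm] using hv
      have h2 : ‖v‖ ≤ ‖v - w‖ + ‖w‖ := by simpa using norm_add_le (v - w) w
      simp; linarith
    have hdc : DiffContOnCl ℂ φ (Metric.ball w (R / 4)) := by
      refine DifferentiableOn.diffContOnCl ?_
      rw [closure_ball _ (by positivity)]
      exact fun v hv => (hφ v (hsub hv)).differentiableAt.differentiableWithinAt
    have := Complex.norm_deriv_le_of_forall_mem_sphere_norm_le (by positivity) hdc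
      (C := 2 * M) (fun v hv => hBC v (by
        have h1 : ‖v - w‖ = R / 4 := by simpa [dist_eq_norm] using hv
        have h2 : ‖v‖ ≤ ‖v - w‖ + ‖w‖ := by simpa using norm_add_le (v - w) w
        linarith))
    rw [(hφ w (by simp; linarith)).deriv] at this
    refine this.trans (le_of_eq ?_)
    field_simp; ring
  have hS := Complex.dist_le_div_mul_dist_of_mapsTo_ball (f := logDeriv g) (c := 0) (R₁ := R / 4)
    (R₂ := 16 * M / R) (z := z) (hd.mono (Metric.ball_subset_ball (by linarith))) (by
      intro w hw
      rw [Metric.mem_closedBall, dist_eq_norm]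
      have h1 := hder w (by simpa using hw)
      have h2 := hder 0 (by simpa using hR)
      calc _ ≤ ‖logDeriv g w‖ + ‖logDeriv g 0‖ := norm_sub_le _ _
        _ ≤ 8 * M / R + 8 * M / R := add_le_add h1 h2
        _ = _ := by ring) (by simpa using hz)
  rw [dist_eq_norm, dist_zero_right] at hS
  refine hS.trans (le_of_eq ?_)
  field_simp; ring

lemma hd_logDeriv (f g : ℂ → ℂ) (hg : Differentiable ℂ g) (S : Finset ℂ) (m : ℂ → ℕ)
    (hfg : ∀ z, f z = (∏ p ∈ S, (z - p) ^ m p) * g z) (z : ℂ) (hz : f z ≠ 0)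
    (hzS : ∀ p ∈ S, z ≠ p) :
    logDeriv f z = ∑ p ∈ S, (m p : ℂ) / (z - p) + logDeriv g z := by
  have hfe : f = fun z => (∏ p ∈ S, (z - p) ^ m p) * g z := funext hfg
  rw [hfg] at hz
  rw [hfe, logDeriv_mul z (left_ne_zero_of_mul hz) (right_ne_zero_of_mul hz) (by fun_prop) (hg z)]
  congr 1
  rw [logDeriv_prod]
  · refine Finset.sum_congr rfl fun p hp => ?_
    rw [logDeriv_fun_pow (by fun_prop), logDeriv_apply]
    simp [div_eq_mul_inv]
  · intro p hp
    exact pow_ne_zero _ (sub_ne_zero.mpr (hzS p hp))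
  · intro p hp; fun_prop

theorem hadamard_limit (f : ℂ → ℂ) (hf : Differentiable ℂ f) (h0 : f 0 ≠ 0) (C : ℝ) (hC : 0 < C)
    (hgrow : ∀ R : ℝ, 1 ≤ R → ∀ z, ‖z‖ ≤ R → ‖f z‖ ≤ Real.exp (C * (R * √R)))
    (Z : ℝ → Finset ℂ) (hZ : ∀ R z, z ∈ Z R ↔ f z = 0 ∧ ‖z‖ ≤ R) (z : ℂ) (hz : f z ≠ 0) :
    Tendsto (fun R => logDeriv f z - logDeriv f 0 -
      ∑ p ∈ Z R, (analyticOrderNatAt f p : ℂ) * (1 / (z - p) - 1 / (0 - p))) atTop (nhds 0) := by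
  have hord : ∀ p, analyticOrderAt f p ≠ ⊤ := by
    intro p hp
    have h1 : ∀ᶠ w in nhds p, f w = 0 := analyticOrderAt_eq_top.mp hp
    have h2 := (Complex.analyticOnNhd_univ_iff_differentiable.mpr hf).eq_of_eventuallyEq
      (g := fun _ => 0) (fun _ _ => analyticAt_const) h1
    exact h0 (congrFun h2 0)
  set K : ℝ := |Real.log ‖f 0‖| + 1 with hK
  have hKpos : 0 < K := by positivity
  have key : ∀ R : ℝ, 1 ≤ R → ‖z‖ < R / 4 → ‖logDeriv f z - logDeriv f 0 -
      ∑ p ∈ Z R, (analyticOrderNatAt f p : ℂ) * (1 / (z - p) - 1 / (0 - p))‖ ≤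
      64 * (C * (2 * R * √(2 * R)) + K) / R ^ 2 * ‖z‖ := by
    intro R hR hzR
    obtain ⟨g, hg, hgS, hfg⟩ := hd_factor f hf hord (Z R)
    have hg0 : g 0 ≠ 0 := by
      have := h0; rw [hfg] at this; exact right_ne_zero_of_mul this
    have hne : ∀ w ∈ Metric.ball (0 : ℂ) R, g w ≠ 0 := by
      intro w hw
      by_cases hfw : f w = 0
      · exact hgS w ((hZ R w).mpr ⟨hfw, by simpa using (le_of_lt (by simpa using hw))⟩)
      · rw [hfg] at hfw; exact right_ne_zero_of_mul hfw
    have hb2 : ∀ w, ‖w‖ = 2 * R → ‖g w‖ ≤ Real.exp (C * (2 * R * √(2 * R)) + K) * ‖g 0‖ := by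
      intro w hw
      have h1 : ‖∏ p ∈ Z R, (0 - p) ^ analyticOrderNatAt f p‖ ≤
          ‖∏ p ∈ Z R, (w - p) ^ analyticOrderNatAt f p‖ := by
        rw [norm_prod, norm_prod]
        refine Finset.prod_le_prod (fun _ _ => norm_nonneg _) fun p hp => ?_
        rw [norm_pow, norm_pow]
        refine pow_le_pow_left₀ (norm_nonneg _) ?_ _
        have hp' := ((hZ R p).mp hp).2
        have : ‖w‖ ≤ ‖w - p‖ + ‖p‖ := by simpa using norm_add_le (w - p) p
        rw [zero_sub, norm_neg]; linarith
      have h2 := hgrow (2 * R) (by linarith) w hw.le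
      set P0 := ∏ p ∈ Z R, (0 - p) ^ analyticOrderNatAt f p with hP0
      set Pw := ∏ p ∈ Z R, (w - p) ^ analyticOrderNatAt f p with hPw
      have hf0 : ‖f 0‖ = ‖P0‖ * ‖g 0‖ := by rw [hfg 0, norm_mul]
      have hfw : ‖f w‖ = ‖Pw‖ * ‖g w‖ := by rw [hfg w, norm_mul]
      have hP0p : 0 < ‖P0‖ := by
        have := h0; rw [hfg] at this; exact norm_pos_iff.mpr (left_ne_zero_of_mul this)
      have h3 : 1 ≤ Real.exp K * ‖f 0‖ := by
        have hpos : 0 < ‖f 0‖ := norm_pos_iff.mpr h0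
        rw [← Real.exp_log hpos, ← Real.exp_add]
        apply Real.one_le_exp
        have := neg_abs_le (Real.log ‖f 0‖)
        simp only [hK]; linarith
      have h4 : ‖P0‖ * ‖g w‖ ≤ ‖P0‖ * (Real.exp (C * (2 * R * √(2 * R)) + K) * ‖g 0‖) := by
        calc ‖P0‖ * ‖g w‖ ≤ ‖Pw‖ * ‖g w‖ := by gcongr
          _ = ‖f w‖ := hfw.symm
          _ ≤ Real.exp (C * (2 * R * √(2 * R))) * 1 := by rw [mul_one]; exact h2
          _ ≤ Real.exp (C * (2 * R * √(2 * R))) * (Real.exp K * ‖f 0‖) := by gcongr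
          _ = _ := by rw [hf0, Real.exp_add _ K]; ring
      exact le_of_mul_le_mul_left h4 hP0p
    have hb : ∀ w ∈ Metric.ball (0 : ℂ) R,
        ‖g w‖ ≤ Real.exp (C * (2 * R * √(2 * R)) + K) * ‖g 0‖ := by
      intro w hw
      refine Complex.norm_le_of_forall_mem_frontier_norm_le (U := Metric.ball (0 : ℂ) (2 * R))
        Metric.isBounded_ball hg.diffContOnCl ?_ ?_
      · intro v hv
        rw [frontier_ball _ (by positivity)] at hv
        exact hb2 v (by simpa using hv)
      · apply subset_closure
        simp at hw ⊢; linarith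
    have := hd_log g hg R (by linarith) hne (C * (2 * R * √(2 * R)) + K) (by positivity) hb z hzR
    have hl : ∀ w, f w ≠ 0 → logDeriv f w =
        ∑ p ∈ Z R, (analyticOrderNatAt f p : ℂ) / (w - p) + logDeriv g w := fun w hw =>
      hd_logDeriv f g hg (Z R) _ hfg w hw (by
        rintro p hp rfl; exact hw ((hZ R _).mp hp).1)
    convert! this using 2
    rw [hl z hz, hl 0 h0]
    simp only [mul_sub, Finset.sum_sub_distrib, mul_one_div]
    ring
  refine squeeze_zero_norm' (a := fun R : ℝ =>
    64 * (C * (2 * R * √(2 * R)) + K) / R ^ 2 * ‖z‖) ?_ ?_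
  · filter_upwards [eventually_ge_atTop 1, eventually_gt_atTop (4 * ‖z‖)] with R h1 h2
    exact key R h1 (by linarith)
  · have h1 : Tendsto (fun R : ℝ => 64 * ‖z‖ * (2 * √2 * C * (√R)⁻¹ + K * (R⁻¹ * R⁻¹))) atTop
        (nhds (64 * ‖z‖ * (2 * √2 * C * 0 + K * (0 * 0)))) := by
      refine Tendsto.const_mul _ (Tendsto.add (Tendsto.const_mul _ ?_) (Tendsto.const_mul _ ?_))
      · exact tendsto_inv_atTop_zero.comp Real.tendsto_sqrt_atTop
      · exact tendsto_inv_atTop_zero.mul tendsto_inv_atTop_zero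
    simp only [mul_zero, add_zero] at h1
    refine h1.congr' ?_
    filter_upwards [eventually_gt_atTop 0] with R hR
    have hs : √R * √R = R := Real.mul_self_sqrt hR.le
    have hsp : 0 < √R := Real.sqrt_pos.mpr hR
    rw [Real.sqrt_mul (by norm_num)]
    have : R⁻¹ * √R = (√R)⁻¹ := by
      field_simp; nlinarith
    rw [← this]
    field_simp

lemma xi_growth_aux : ∃ A B δ : ℝ, 0 < A ∧ 0 < B ∧ 0 < δ ∧ ∀ w : ℂ, 1/4 ≤ w.re →
    ‖(HurwitzZeta.hurwitzEvenFEPair 0).Λ₀ w‖ ≤ A + B * Real.exp (w.re * Real.log (w.re / δ)) := by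
  set P := HurwitzZeta.hurwitzEvenFEPair 0 with hP
  obtain ⟨p, hp, hO⟩ := HurwitzZeta.isBigO_atTop_evenKernel_sub 0
  set g : ℝ → ℝ := fun t => HurwitzZeta.evenKernel 0 t - 1 with hg
  have hO' : g =O[atTop] (fun t => Real.exp (-p * t)) := by simpa [hg] using hO
  have hgc : ContinuousOn g (Set.Ioi 0) :=
    (HurwitzZeta.continuousOn_evenKernel 0).sub continuousOn_const
  have hI2 : IntegrableOn (fun t => ‖g t‖ * Real.exp (p / 2 * t)) (Set.Ioi 1) := by
    refine integrable_of_isBigO_exp_neg (b := p / 2) (by positivity) ?_ ?_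
    · refine ContinuousOn.mul ?_ (by fun_prop)
      exact (hgc.mono (Set.Ici_subset_Ioi.mpr one_pos)).norm
    · have := hO'.norm_left.mul (Asymptotics.isBigO_refl (fun t => Real.exp (p / 2 * t)) atTop)
      refine this.trans (Eventually.of_forall (fun t => ?_)|> fun h => Asymptotics.IsBigO.of_bound 1 h)
      rw [← Real.exp_add]
      simp only [Real.norm_eq_abs, Real.abs_exp, one_mul, Real.exp_le_exp]
      linarith
  have hmc : ∀ s, MellinConvergent P.f_modif s := fun s =>
    ((P.isStrongFEPair_toStrongFEPair).hasMellin s).1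
  have hI1 : IntegrableOn (fun t : ℝ => t ^ (1/4 - 1 : ℝ) * ‖P.f_modif t‖) (Set.Ioi 0) := by
    have := (hmc (1/4)).norm
    refine IntegrableOn.congr_fun this (fun t ht => ?_) measurableSet_Ioi
    simp only [norm_smul]
    rw [Complex.norm_cpow_eq_rpow_re_of_pos ht]
    norm_num
  set A := ∫ t in Set.Ioi (0:ℝ), t ^ (1/4 - 1 : ℝ) * ‖P.f_modif t‖ with hA
  set B := ∫ t in Set.Ioi (1:ℝ), ‖g t‖ * Real.exp (p / 2 * t) with hB
  have hA0 : 0 ≤ A := setIntegral_nonneg measurableSet_Ioi (fun t ht => by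
    have : (0:ℝ) < t := ht
    positivity)
  have hB0 : 0 ≤ B := setIntegral_nonneg measurableSet_Ioi (fun t ht => by positivity)
  refine ⟨A + 1, B + 1, p / 2, by positivity, by positivity, by positivity, fun w hw => ?_⟩
  set E := Real.exp (w.re * Real.log (w.re / (p/2))) with hE
  have hE0 : 0 < E := Real.exp_pos _
  have hw0 : 0 < w.re := by linarith
  have hI3 : IntegrableOn (fun t => E * (Set.indicator (Set.Ioi 1) (fun t => ‖g t‖ * Real.exp (p / 2 * t)) t)) (Set.Ioi 0) := by
    refine Integrable.const_mul ?_ _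
    exact ((integrable_indicator_iff measurableSet_Ioi).mpr hI2).integrableOn
  have hb : ‖P.Λ₀ w‖ ≤ ∫ t in Set.Ioi (0:ℝ), (t ^ (1/4 - 1 : ℝ) * ‖P.f_modif t‖ +
      E * (Set.indicator (Set.Ioi 1) (fun t => ‖g t‖ * Real.exp (p / 2 * t)) t)) := by
    refine norm_integral_le_of_norm_le (hI1.add hI3) ?_
    refine (ae_restrict_iff' measurableSet_Ioi).mpr (Eventually.of_forall fun t ht => ?_)
    have ht0 : (0:ℝ) < t := ht
    rw [norm_smul, Complex.norm_cpow_eq_rpow_re_of_pos ht0]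
    simp only [Complex.sub_re, Complex.one_re]
    by_cases h1 : 1 < t
    · have e1 : P.f_modif t = (g t : ℂ) := by
        simp [WeakFEPair.f_modif, h1, hP, HurwitzZeta.hurwitzEvenFEPair, hg, not_lt.mpr h1.le]
      rw [Set.indicator_of_mem (by exact h1), e1, Complex.norm_real]
      have e2 : t ^ (w.re - 1) ≤ E * Real.exp (p / 2 * t) := by
        calc t ^ (w.re - 1) ≤ t ^ w.re := Real.rpow_le_rpow_of_exponent_le h1.le (by linarith)
          _ ≤ _ := by
            rw [Real.rpow_def_of_pos ht0, hE, ← Real.exp_add, Real.exp_le_exp]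
            have hq : 0 < t / (w.re / (p/2)) := by positivity
            have := Real.log_le_sub_one_of_pos hq
            rw [Real.log_div (by positivity) (by positivity)] at this
            have h3 := mul_le_mul_of_nonneg_left this hw0.le
            have h4 : w.re * (t / (w.re / (p/2)) - 1) = p / 2 * t - w.re := by
              field_simp
            rw [h4] at h3
            linarith
      have := mul_le_mul_of_nonneg_right e2 (norm_nonneg (g t))
      have h5 : 0 ≤ t ^ (1/4 - 1 : ℝ) * ‖g t‖ := by positivity
      nlinarith
    · rw [Set.indicator_of_notMem (by exact h1), mul_zero, add_zero]
      refine mul_le_mul_of_nonneg_right ?_ (norm_nonneg _)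
      exact Real.rpow_le_rpow_of_exponent_ge ht0 (not_lt.mp h1) (by linarith)
  rw [integral_add hI1 hI3, integral_const_mul, setIntegral_indicator measurableSet_Ioi,
    Set.inter_eq_self_of_subset_right (Set.Ioi_subset_Ioi zero_le_one), ← hA, ← hB] at hb
  nlinarith

def xiF (s : ℂ) : ℂ := s * (s - 1) * completedRiemannZeta₀ s + 1

lemma xiF_diff : Differentiable ℂ xiF := by
  have := differentiable_completedZeta₀
  unfold xiF; fun_prop

lemma xiF_one_sub (s : ℂ) : xiF (1 - s) = xiF s := by
  simp only [xiF, completedRiemannZeta₀_one_sub]; ring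

lemma log_le_two_sqrt (x : ℝ) (hx : 0 ≤ x) : Real.log x ≤ 2 * √x := by
  rcases hx.eq_or_lt with rfl | h
  · simp
  · have := Real.log_le_sub_one_of_pos (Real.sqrt_pos.mpr h)
    rw [Real.log_sqrt hx] at this
    linarith

lemma xi_growth_half : ∃ C : ℝ, 0 < C ∧ ∀ R : ℝ, 1 ≤ R → ∀ s : ℂ, ‖s‖ ≤ R → 1/2 ≤ s.re →
    ‖xiF s‖ ≤ Real.exp (C * (R * √R)) := by
  obtain ⟨A, B, δ, hA, hB, hδ, h⟩ := xi_growth_aux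
  obtain ⟨D, hD0, hD⟩ : ∃ D : ℝ, 0 ≤ D ∧ -Real.log δ ≤ D := ⟨|Real.log δ|, abs_nonneg _, neg_le_abs _⟩
  refine ⟨4 + A + B + D + 2, by positivity, fun R hR s hs hre => ?_⟩
  have h1 := h (s/2) (by simp; linarith)
  have hre2 : (s/2).re = s.re/2 := by simp
  rw [hre2] at h1
  have hsR : s.re ≤ R := (Complex.re_le_norm s).trans hs
  have hsq : 1 ≤ √R := Real.one_le_sqrt.mpr hR
  have hsq0 : √R * √R = R := Real.mul_self_sqrt (by linarith)
  have hRR : R ≤ R * √R := by nlinarith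
  have h2 : s.re/2 * Real.log (s.re/2/δ) ≤ (2 + D) * (R * √R) := by
    have e : Real.log (s.re/2/δ) ≤ (2 + D) * √R := by
      rw [Real.log_div (by linarith) hδ.ne']
      have := Real.log_le_log (by linarith : 0 < s.re/2) (by linarith : s.re/2 ≤ R)
      have := log_le_two_sqrt R (by linarith)
      nlinarith
    calc s.re/2 * Real.log (s.re/2/δ) ≤ s.re/2 * ((2 + D) * √R) :=
          mul_le_mul_of_nonneg_left e (by linarith)
      _ ≤ R * ((2 + D) * √R) := mul_le_mul_of_nonneg_right (by linarith) (by positivity)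
      _ = _ := by ring
  have h3 : ‖completedRiemannZeta₀ s‖ ≤ (A + B) * Real.exp ((2 + D) * (R * √R)) := by
    have e1 : completedRiemannZeta₀ s = (HurwitzZeta.hurwitzEvenFEPair 0).Λ₀ (s/2) / 2 := rfl
    rw [e1, norm_div]
    have e2 := Real.exp_le_exp.mpr h2
    have e3 : 1 ≤ Real.exp ((2 + D) * (R * √R)) := Real.one_le_exp (by positivity)
    have : ‖(2:ℂ)‖ = 2 := by simp
    rw [this]
    nlinarith [norm_nonneg ((HurwitzZeta.hurwitzEvenFEPair 0).Λ₀ (s/2))]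
  have h4 : ‖s * (s - 1)‖ ≤ 2 * R * R := by
    rw [norm_mul]
    have : ‖s - 1‖ ≤ 2 * R := (norm_sub_le _ _).trans (by simp; linarith)
    nlinarith [norm_nonneg s, norm_nonneg (s-1)]
  have hE : 1 ≤ Real.exp ((2 + D) * (R * √R)) := Real.one_le_exp (by positivity)
  calc ‖xiF s‖ ≤ ‖s * (s-1)‖ * ‖completedRiemannZeta₀ s‖ + 1 := by
        unfold xiF; refine (norm_add_le _ _).trans (by rw [norm_mul]; simp)
    _ ≤ 2 * R * R * ((A + B) * Real.exp ((2 + D) * (R * √R))) + 1 := by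
        gcongr
    _ ≤ Real.exp (2 * R) * Real.exp (A + B) * Real.exp ((2 + D) * (R * √R)) := by
        have q1 : 1 + 2*R*R ≤ Real.exp (2*R) := by
          have := Real.quadratic_le_exp_of_nonneg (by linarith : 0 ≤ 2*R)
          nlinarith
        have q2 : 1 + (A + B) ≤ Real.exp (A + B) := by linarith [Real.add_one_le_exp (A+B)]
        have q3 : 2 * R * R * (A+B) + 1 ≤ Real.exp (2 * R) * Real.exp (A + B) := by
          calc 2 * R * R * (A+B) + 1 ≤ (1 + 2*R*R) * (1 + (A+B)) := by nlinarith
            _ ≤ _ := by gcongr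
        nlinarith
    _ ≤ _ := by
        rw [← Real.exp_add, ← Real.exp_add, Real.exp_le_exp]
        nlinarith

lemma xi_growth : ∃ C : ℝ, 0 < C ∧ ∀ R : ℝ, 1 ≤ R → ∀ z : ℂ, ‖z‖ ≤ R →
    ‖xiF (3/2 + z)‖ ≤ Real.exp (C * (R * √R)) := by
  obtain ⟨C, hC, h⟩ := xi_growth_half
  refine ⟨C * 16, by positivity, fun R hR z hz => ?_⟩
  have hn : ‖3/2 + z‖ ≤ 4 * R := (norm_add_le _ _).trans (by norm_num; linarith)
  have hn2 : ‖1 - (3/2 + z)‖ ≤ 4 * R := by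
    have : 1 - (3/2 + z) = -(1/2) - z := by ring
    rw [this]
    exact (norm_sub_le _ _).trans (by norm_num; linarith)
  have key : ‖xiF (3/2 + z)‖ ≤ Real.exp (C * (4 * R * √(4 * R))) := by
    by_cases hh : 1/2 ≤ (3/2 + z).re
    · exact h _ (by linarith) _ hn hh
    · rw [← xiF_one_sub]
      refine h _ (by linarith) _ hn2 ?_
      simp at hh ⊢; linarith
  refine key.trans (Real.exp_le_exp.mpr ?_)
  rw [Real.sqrt_mul (by norm_num), show (4:ℝ) = 2 * 2 by norm_num, Real.sqrt_mul_self (by norm_num)]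
  have : 0 < √R := Real.sqrt_pos.mpr (by linarith)
  nlinarith [mul_pos (mul_pos hC (by linarith : 0 < R)) this]

lemma sInf_eq_order (f : ℂ → ℂ) (z : ℂ) (hf : AnalyticAt ℂ f z) (ht : analyticOrderAt f z ≠ ⊤) :
    sInf {n : ℕ | iteratedDeriv n f z ≠ 0} = analyticOrderNatAt f z := by
  have hm : (analyticOrderNatAt f z : ℕ∞) = analyticOrderAt f z := Nat.cast_analyticOrderNatAt ht
  set m := analyticOrderNatAt f z
  have h1 : ∀ i < m, iteratedDeriv i f z = 0 :=
    (natCast_le_analyticOrderAt_iff_iteratedDeriv_eq_zero hf).mp hm.le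
  have h2 : iteratedDeriv m f z ≠ 0 := by
    intro h0
    have : ((m + 1 : ℕ) : ℕ∞) ≤ analyticOrderAt f z := by
      refine (natCast_le_analyticOrderAt_iff_iteratedDeriv_eq_zero hf).mpr fun i hi => ?_
      rcases Nat.lt_succ_iff_lt_or_eq.mp hi with h | rfl
      · exact h1 i h
      · exact h0
    rw [← hm] at this
    have := Nat.cast_le.mp this
    omega
  refine le_antisymm (Nat.sInf_le h2) ?_
  refine le_csInf ⟨m, h2⟩ fun n hn => ?_
  by_contra h
  exact hn (h1 n (not_le.mp h))

lemma xiF_eq_completed (s : ℂ) (h0 : s ≠ 0) (h1 : s ≠ 1) :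
    xiF s = s * (s - 1) * completedRiemannZeta s := by
  have : 1 - s ≠ 0 := sub_ne_zero.mpr h1.symm
  rw [completedRiemannZeta_eq, xiF]
  field_simp
  ring

lemma xiF_eq (s : ℂ) (h0 : 0 < s.re) (h1 : s ≠ 1) :
    xiF s = s * (s - 1) * Complex.Gammaℝ s * riemannZeta s := by
  have hs : s ≠ 0 := by rintro rfl; simp at h0
  rw [xiF_eq_completed s hs h1, riemannZeta_def_of_ne_zero hs]
  have := Complex.Gammaℝ_ne_zero_of_re_pos h0
  field_simp

lemma xiF_ne_zero (s : ℂ) (h : 1 ≤ s.re) : xiF s ≠ 0 := by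
  by_cases h1 : s = 1
  · subst h1; simp [xiF]
  · rw [xiF_eq s (by linarith) h1]
    have hs : s ≠ 0 := by rintro rfl; simp at h; linarith
    exact mul_ne_zero (mul_ne_zero (mul_ne_zero hs (sub_ne_zero.mpr h1))
      (Complex.Gammaℝ_ne_zero_of_re_pos (by linarith))) (riemannZeta_ne_zero_of_one_le_re h)

lemma xiF_zero_re (hRH : RiemannHypothesis) (s : ℂ) (h : xiF s = 0) : s.re = 1/2 := by
  have h1 : s.re < 1 := by
    by_contra hh; exact xiF_ne_zero s (not_lt.mp hh) h
  have h0 : 0 < s.re := by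
    by_contra hh
    refine xiF_ne_zero (1 - s) (by simp; linarith) (by rw [xiF_one_sub, h])
  have hs1 : s ≠ 1 := by rintro rfl; simp at h1
  have hs : s ≠ 0 := by rintro rfl; simp at h0
  rw [xiF_eq s h0 hs1] at h
  have hz : riemannZeta s = 0 := by
    rcases mul_eq_zero.mp h with h | h
    · exact absurd h (mul_ne_zero (mul_ne_zero hs (sub_ne_zero.mpr hs1))
        (Complex.Gammaℝ_ne_zero_of_re_pos (by linarith)))
    · exact h
  refine hRH s hz ?_ hs1
  rintro ⟨n, rfl⟩
  have : (-2 * ((n:ℂ) + 1)).re = -2 * ((n:ℝ) + 1) := by simp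
  rw [this] at h0
  have : (0:ℝ) ≤ n := n.cast_nonneg
  linarith

lemma rho_re (γ : ℝ) : ((1/2 : ℂ) + γ * Complex.I).re = 1/2 := by simp
lemma rho_im (γ : ℝ) : ((1/2 : ℂ) + γ * Complex.I).im = γ := by simp

lemma rho_ne_one (γ : ℝ) : (1/2 : ℂ) + γ * Complex.I ≠ 1 := by
  intro h
  have := congrArg Complex.re h
  rw [rho_re] at this; norm_num at this

lemma rho_ne_zero (γ : ℝ) : (1/2 : ℂ) + γ * Complex.I ≠ 0 := by
  intro h
  have := congrArg Complex.re h
  rw [rho_re] at this; norm_num at this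

lemma xiF_rho_iff (γ : ℝ) : xiF (1/2 + γ * Complex.I) = 0 ↔ γ ∈ allOrds := by
  have hre := rho_re γ
  rw [xiF_eq _ (by rw [hre]; norm_num) (rho_ne_one γ)]
  have : Complex.Gammaℝ (1/2 + γ * Complex.I) ≠ 0 :=
    Complex.Gammaℝ_ne_zero_of_re_pos (by rw [hre]; norm_num)
  rw [mul_eq_zero]
  constructor
  · rintro (h | h)
    · exact absurd h (mul_ne_zero (mul_ne_zero (rho_ne_zero γ) (sub_ne_zero.mpr (rho_ne_one γ))) this)
    · exact h
  · intro h; right; exact h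

lemma xiF_analyticAt (s : ℂ) : AnalyticAt ℂ xiF s := xiF_diff.analyticAt s

lemma xiF_order_ne_top (s : ℂ) : analyticOrderAt xiF s ≠ ⊤ := by
  have han : AnalyticOnNhd ℂ xiF Set.univ := fun s _ => xiF_analyticAt s
  refine han.analyticOrderAt_ne_top_of_isPreconnected (x := 1) isPreconnected_univ trivial trivial ?_
  have : analyticOrderAt xiF 1 = 0 := analyticOrderAt_eq_zero.mpr (Or.inr (xiF_ne_zero 1 (by simp)))
  rw [this]; simp

lemma ordMult_eq (γ : ℝ) : analyticOrderNatAt xiF (1/2 + γ * Complex.I) = ordMult γ := by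
  set ρ : ℂ := 1/2 + γ * Complex.I with hρ
  have hre : ρ.re = 1/2 := rho_re γ
  have hζ : AnalyticAt ℂ riemannZeta ρ := by
    have : DifferentiableOn ℂ riemannZeta {1}ᶜ := fun s hs =>
      (differentiableAt_riemannZeta hs).differentiableWithinAt
    exact this.analyticAt (isOpen_compl_singleton.mem_nhds (rho_ne_one γ))
  set h : ℂ → ℂ := fun s => s * (s - 1) * Complex.Gammaℝ s with hh
  have hhA : AnalyticAt ℂ h ρ := by
    have hd : DifferentiableOn ℂ h {s | 0 < s.re} := by
      intro s hs
      have : DifferentiableAt ℂ Complex.Gammaℝ s := by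
        unfold Complex.Gammaℝ
        refine DifferentiableAt.mul ?_ ?_
        · refine DifferentiableAt.const_cpow (by fun_prop) (Or.inl (by simp [Real.pi_ne_zero]))
        · refine DifferentiableAt.comp s (g := Complex.Gamma) (Complex.differentiableAt_Gamma _ ?_) (by fun_prop)
          intro m hm
          have := congrArg Complex.re hm
          have hs' : 0 < s.re := hs
          simp at this
          have h0 : (0:ℝ) ≤ m := m.cast_nonneg
          linarith
      exact DifferentiableAt.differentiableWithinAt (by fun_prop)
    refine hd.analyticAt ((isOpen_lt continuous_const Complex.continuous_re).mem_nhds ?_)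
    change 0 < ρ.re
    rw [hre]; norm_num
  have hev : xiF =ᶠ[nhds ρ] h * riemannZeta := by
    have o1 : {s : ℂ | 0 < s.re} ∈ nhds ρ := (isOpen_lt continuous_const Complex.continuous_re).mem_nhds (by
      change 0 < ρ.re
      rw [hre]; norm_num)
    have o2 : {1}ᶜ ∈ nhds ρ := isOpen_compl_singleton.mem_nhds (rho_ne_one γ)
    filter_upwards [o1, o2] with s h1 h2
    simp only [Pi.mul_apply, hh]
    exact xiF_eq s h1 h2
  have h0 : analyticOrderAt h ρ = 0 := by
    refine analyticOrderAt_eq_zero.mpr (Or.inr ?_)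
    exact mul_ne_zero (mul_ne_zero (rho_ne_zero γ) (sub_ne_zero.mpr (rho_ne_one γ)))
      (Complex.Gammaℝ_ne_zero_of_re_pos (by rw [hre]; norm_num))
  have heq : analyticOrderAt xiF ρ = analyticOrderAt riemannZeta ρ := by
    rw [analyticOrderAt_congr hev, analyticOrderAt_mul hhA hζ, h0, zero_add]
  rw [ordMult, zetaMult, sInf_eq_order _ _ hζ (by rw [← heq]; exact xiF_order_ne_top _),
    analyticOrderNatAt, analyticOrderNatAt, heq]

lemma ords_finite (R : ℝ) : {γ : ℝ | γ ∈ allOrds ∧ ‖(1/2 + γ * Complex.I - 3/2 : ℂ)‖ ≤ R}.Finite := by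
  have h := (isCompact_closedBall (3/2 : ℂ) R).inter_riemannZetaZeros_finite
  refine Set.Finite.of_finite_image (f := fun γ : ℝ => (1/2 + γ * Complex.I : ℂ)) (h.subset ?_) ?_
  · rintro _ ⟨γ, ⟨h1, h2⟩, rfl⟩
    exact ⟨by simpa [dist_eq_norm] using h2, h1⟩
  · intro a _ b _ hab
    have := congrArg Complex.im hab
    simpa using this

lemma allOrds_countable : allOrds.Countable := by
  have : allOrds ⊆ ⋃ n : ℕ, {γ : ℝ | γ ∈ allOrds ∧ ‖(1/2 + γ * Complex.I - 3/2 : ℂ)‖ ≤ n} := by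
    intro γ hγ
    obtain ⟨n, hn⟩ := exists_nat_ge ‖(1/2 + γ * Complex.I - 3/2 : ℂ)‖
    exact Set.mem_iUnion.mpr ⟨n, hγ, hn⟩
  exact (Set.countable_iUnion fun n : ℕ => (ords_finite (n:ℝ)).countable).mono this

def ordsR (R : ℝ) : Finset allOrds :=
  ((ords_finite R).preimage (Subtype.val_injective.injOn (s := Subtype.val ⁻¹' _))).toFinset

lemma mem_ordsR (R : ℝ) (γ : allOrds) : γ ∈ ordsR R ↔ ‖(1/2 + (γ:ℝ) * Complex.I - 3/2 : ℂ)‖ ≤ R := by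
  simp [ordsR]

lemma xi_hadamard (hRH : RiemannHypothesis) (s : ℂ) (hs : xiF s ≠ 0) :
    Tendsto (fun R => logDeriv xiF s - logDeriv xiF (3/2) - ∑ γ ∈ ordsR R, (ordMult (γ:ℝ) : ℂ) *
      (1 / (s - (1/2 + (γ:ℝ) * Complex.I)) - 1 / (3/2 - (1/2 + (γ:ℝ) * Complex.I)))) atTop (nhds 0) := by
  obtain ⟨C, hC, hg⟩ := xi_growth
  set f : ℂ → ℂ := fun z => xiF (3/2 + z) with hf
  have hfd : Differentiable ℂ f := xiF_diff.comp (by fun_prop)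
  have hld : ∀ z, logDeriv f z = logDeriv xiF (3/2 + z) := by
    intro z
    simp only [logDeriv_apply, hf]
    rw [deriv_comp_const_add]
  have hord : ∀ p, analyticOrderNatAt f p = analyticOrderNatAt xiF (3/2 + p) := by
    intro p
    have : f = xiF ∘ (fun z => 3/2 + z) := rfl
    rw [analyticOrderNatAt, analyticOrderNatAt, this,
      analyticOrderAt_comp_of_deriv_ne_zero (by fun_prop) (by simp)]
  classical
  have := hadamard_limit f hfd (by simp only [hf, add_zero]; exact xiF_ne_zero _ (by norm_num)) C hC hg
    (fun R => (ordsR R).image (fun γ : allOrds => (1/2 + (γ:ℝ) * Complex.I - 3/2 : ℂ))) ?_ (s - 3/2)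
    (by simpa [hf] using hs)
  · refine this.congr fun R => ?_
    rw [hld, hld, Finset.sum_image]
    · simp only [add_sub_cancel, add_zero]
      congr 1
      refine Finset.sum_congr rfl fun γ _ => ?_
      rw [hord, add_sub_cancel, ordMult_eq]
      congr 3 <;> ring
    · intro a _ b _ hab
      have := congrArg Complex.im hab
      exact Subtype.ext (by simpa using this)
  · intro R z
    rw [Finset.mem_image]
    constructor
    · rintro ⟨γ, hγ, rfl⟩
      refine ⟨?_, (mem_ordsR R γ).mp hγ⟩
      simp only [hf, add_sub_cancel]
      exact (xiF_rho_iff _).mpr γ.2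
    · rintro ⟨h1, h2⟩
      have hre := xiF_zero_re hRH _ h1
      have hz : z = 1/2 + ((3/2 + z).im : ℝ) * Complex.I - 3/2 := by
        apply Complex.ext
        · simp at hre ⊢; linarith
        · simp
      have hmem : (3/2 + z).im ∈ allOrds := by
        rw [← xiF_rho_iff]
        have : 1/2 + ((3/2 + z).im : ℝ) * Complex.I = 3/2 + z := by
          conv_rhs => rw [hz]
          ring
        rw [this]; exact h1
      refine ⟨⟨_, hmem⟩, ?_, hz.symm⟩
      rw [mem_ordsR]
      change ‖(1/2 + ((3/2 + z).im : ℝ) * Complex.I - 3/2 : ℂ)‖ ≤ R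
      rw [← hz]; exact h2

lemma xi_logDeriv_one_sub (s : ℂ) : logDeriv xiF (1 - s) = - logDeriv xiF s := by
  have h : deriv xiF s = - deriv xiF (1 - s) := by
    have : xiF = fun s => xiF (1 - s) := by ext s; rw [xiF_one_sub]
    conv_lhs => rw [this]
    rw [deriv_comp_const_sub]
  rw [logDeriv_apply, logDeriv_apply, h, xiF_one_sub]
  ring

def zterm (s : ℂ) (γ : ℝ) : ℂ := 1 / (s - (1/2 + γ * Complex.I))

lemma zterm_re_nonneg (s : ℂ) (hs : 1/2 < s.re) (γ : ℝ) : 0 ≤ (zterm s γ).re := by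
  rw [zterm, one_div, Complex.inv_re]
  refine div_nonneg ?_ (Complex.normSq_nonneg _)
  simp; linarith

lemma xi_hasSum (hRH : RiemannHypothesis) (s : ℂ) (hs : 1/2 < s.re) :
    HasSum (fun γ : allOrds => (ordMult (γ:ℝ) : ℝ) * (zterm s γ).re) (logDeriv xiF s).re := by
  have hne : ∀ s : ℂ, s.re ≠ 1/2 → xiF s ≠ 0 := fun s h1 h2 => h1 (xiF_zero_re hRH s h2)
  have hA : ∀ s : ℂ, s.re ≠ 1/2 → Tendsto (fun R => (logDeriv xiF s).re - (logDeriv xiF (3/2)).re -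
      (∑ γ ∈ ordsR R, (ordMult (γ:ℝ) : ℝ) * (zterm s γ).re -
       ∑ γ ∈ ordsR R, (ordMult (γ:ℝ) : ℝ) * (zterm (3/2) γ).re)) atTop (nhds 0) := by
    intro s hs
    have := (Complex.continuous_re.tendsto 0).comp (xi_hadamard hRH s (hne s hs))
    rw [Complex.zero_re] at this
    refine this.congr fun R => ?_
    simp only [Function.comp_apply, Complex.sub_re, Complex.re_sum, ← Finset.sum_sub_distrib]
    congr 1
    refine Finset.sum_congr rfl fun γ _ => ?_
    rw [← Complex.ofReal_natCast, Complex.re_ofReal_mul, Complex.sub_re, mul_sub]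
    rfl
  have hB : Tendsto (fun R => ∑ γ ∈ ordsR R, (ordMult (γ:ℝ) : ℝ) * (zterm (3/2) γ).re) atTop
      (nhds (logDeriv xiF (3/2)).re) := by
    have h1 := hA (1 - 3/2) (by norm_num)
    rw [xi_logDeriv_one_sub] at h1
    have h2 : ∀ γ : ℝ, (zterm (1 - 3/2) γ).re = - (zterm (3/2) γ).re := by
      intro γ
      simp only [zterm, one_div, Complex.inv_re, Complex.normSq_apply]
      simp
      norm_num
      ring
    have h3 := (h1.div_const 2).add_const (logDeriv xiF (3/2)).re
    simp only [zero_div, zero_add] at h3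
    refine h3.congr fun R => ?_
    simp only [h2, mul_neg, Finset.sum_neg_distrib, Complex.neg_re]
    ring
  have hC : Tendsto (fun R => ∑ γ ∈ ordsR R, (ordMult (γ:ℝ) : ℝ) * (zterm s γ).re) atTop
      (nhds (logDeriv xiF s).re) := by
    have h3 := ((hA s hs.ne').neg.add hB).add_const ((logDeriv xiF s).re - (logDeriv xiF (3/2)).re)
    have e : -0 + (logDeriv xiF (3/2)).re + ((logDeriv xiF s).re - (logDeriv xiF (3/2)).re) = (logDeriv xiF s).re := by ring
    rw [e] at h3
    refine h3.congr fun R => ?_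
    ring
  have hnn : ∀ γ : allOrds, 0 ≤ (ordMult (γ:ℝ) : ℝ) * (zterm s γ).re := fun γ =>
    mul_nonneg (Nat.cast_nonneg _) (zterm_re_nonneg s hs γ)
  have hmono : Monotone ordsR := by
    intro a b hab γ h
    rw [mem_ordsR] at h ⊢; exact h.trans hab
  have hT : Tendsto ordsR atTop atTop :=
    tendsto_atTop_finset_of_monotone hmono fun γ =>
      ⟨‖(1/2 + (γ:ℝ) * Complex.I - 3/2 : ℂ)‖, (mem_ordsR _ _).mpr le_rfl⟩
  have hsum : Summable (fun γ : allOrds => (ordMult (γ:ℝ) : ℝ) * (zterm s γ).re) := by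
    refine summable_of_sum_le hnn (c := (logDeriv xiF s).re) fun u => ?_
    refine ge_of_tendsto hC ?_
    filter_upwards [hT.eventually (eventually_ge_atTop u)] with R hR
    exact Finset.sum_le_sum_of_subset_of_nonneg hR fun γ _ _ => hnn γ
  have := tendsto_nhds_unique (hsum.hasSum.comp hT) hC
  rw [← this]; exact hsum.hasSum

lemma xi_logDeriv_eq (s : ℂ) (hs : 1 < s.re) :
    logDeriv xiF s = 1 / s + 1 / (s - 1) - Real.log π / 2 + Complex.digamma (s / 2) / 2
      - LSeries (fun n => (ArithmeticFunction.vonMangoldt n : ℂ)) s := by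
  have hs0 : s ≠ 0 := by rintro rfl; simp at hs; linarith
  have hs1 : s ≠ 1 := by rintro rfl; simp at hs
  have hs1' : s - 1 ≠ 0 := sub_ne_zero.mpr hs1
  have hev : xiF =ᶠ[nhds s] fun s => s * (s - 1) * ((π:ℂ) ^ (-s/2) * Complex.Gamma (s/2)) * riemannZeta s := by
    filter_upwards [(isOpen_lt continuous_const Complex.continuous_re).mem_nhds hs] with z hz
    have hz' : 1 < z.re := hz
    exact xiF_eq z (by linarith) (by rintro rfl; simp at hz')
  have hpi : (π : ℂ) ≠ 0 := by simp [Real.pi_ne_zero]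
  have hG : ∀ m : ℕ, s/2 ≠ -m := by
    intro m hm
    have := congrArg Complex.re hm
    simp at this
    have h0 : (0:ℝ) ≤ m := m.cast_nonneg
    linarith
  have hGd := Complex.differentiableAt_Gamma _ hG
  have hG0 := Complex.Gamma_ne_zero hG
  have hζd := differentiableAt_riemannZeta hs1
  have hζ0 := riemannZeta_ne_zero_of_one_le_re hs.le
  have dG : HasDerivAt (fun s => Complex.Gamma (s/2)) (deriv Complex.Gamma (s/2) * (1/2)) s := by
    have h2 : HasDerivAt (fun s : ℂ => s/2) (1/2) s := (hasDerivAt_id s).div_const 2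
    exact HasDerivAt.comp s (h := fun s : ℂ => s/2) hGd.hasDerivAt h2
  have dp : HasDerivAt (fun s : ℂ => (π:ℂ) ^ (-s/2)) ((π:ℂ) ^ (-s/2) * Complex.log π * (-1/2)) s := by
    have h2 : HasDerivAt (fun s : ℂ => -s/2) (-1/2) s := (hasDerivAt_neg s).div_const 2
    exact h2.const_cpow (Or.inl hpi)
  have d1 : HasDerivAt (fun s : ℂ => s * (s - 1)) (1 * (s - 1) + s * 1) s :=
    (hasDerivAt_id s).mul ((hasDerivAt_id s).sub_const 1)
  have dT := (d1.mul (dp.mul dG)).mul hζd.hasDerivAt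
  have hL : LSeries (fun n => (ArithmeticFunction.vonMangoldt n : ℂ)) s = - deriv riemannZeta s / riemannZeta s := by
    exact ArithmeticFunction.LSeries_vonMangoldt_eq_deriv_riemannZeta_div hs
  have hpw : (π:ℂ) ^ (-s/2) ≠ 0 := by simp [Complex.cpow_eq_zero_iff, hpi]
  rw [hL, logDeriv_apply, hev.deriv_eq, hev.self_of_nhds]
  have dT' : deriv (fun s => s * (s - 1) * ((π:ℂ) ^ (-s/2) * Complex.Gamma (s/2)) * riemannZeta s) s = _ := dT.deriv
  rw [dT', Complex.digamma_def, logDeriv_apply, Complex.ofReal_log Real.pi_pos.le]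
  simp only [Pi.mul_apply]
  field_simp
  ring

/-- the Gauss kernel -/
def gk (v : ℝ) : ℝ := 2 / (1 - Real.exp (-2 * v))

lemma one_sub_exp_pos (v : ℝ) (hv : 0 < v) : 0 < 1 - Real.exp (-2 * v) := by
  have : Real.exp (-2*v) < 1 := Real.exp_lt_one_iff.mpr (by linarith)
  linarith

lemma gk_pos (v : ℝ) (hv : 0 < v) : 0 < gk v := div_pos two_pos (one_sub_exp_pos v hv)

lemma gk_le (v : ℝ) (hv : 0 < v) : gk v ≤ (1 + 2 * v) / v := by
  have h := one_sub_exp_pos v hv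
  rw [gk, div_le_div_iff₀ h hv]
  have h1 : Real.exp (-2*v) * (1 + 2*v) ≤ 1 := by
    have := Real.add_one_le_exp (2*v)
    have h2 : Real.exp (-2*v) * Real.exp (2*v) = 1 := by rw [← Real.exp_add]; simp
    nlinarith [Real.exp_pos (-2*v)]
  nlinarith

lemma exp_sub_exp_le (M : ℝ) (a b : ℂ) (ha : a.re ≤ M) (hb : b.re ≤ M) :
    ‖Complex.exp a - Complex.exp b‖ ≤ Real.exp M * ‖a - b‖ := by
  have hc : Convex ℝ {z : ℂ | z.re ≤ M} := convex_halfSpace_re_le M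
  refine hc.norm_image_sub_le_of_norm_deriv_le (𝕜 := ℂ) (f := Complex.exp) (fun x _ => Complex.differentiableAt_exp)
    (fun x hx => ?_) hb ha
  rw [Complex.deriv_exp, Complex.norm_exp]
  exact Real.exp_le_exp.mpr hx

lemma gk_bound (s : ℂ) (hs : 3/2 ≤ s.re) (v : ℝ) (hv : 0 < v) :
    ‖(gk v : ℂ) * (Complex.exp (-2 * v) - Complex.exp (-s * v))‖ ≤
      2 * √(2 * ‖s - 2‖) * (v ^ (-1/2 : ℝ) * Real.exp (-(1/2) * v)) := by
  have ra : (-2 * (v:ℂ)).re ≤ -(3/2) * v := by simp; linarith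
  have rb : (-s * (v:ℂ)).re ≤ -(3/2) * v := by simp; nlinarith
  have h1 : ‖Complex.exp (-2 * v) - Complex.exp (-s * v)‖ ≤ Real.exp (-(3/2) * v) * (‖s - 2‖ * v) := by
    refine (exp_sub_exp_le _ _ _ ra rb).trans (le_of_eq ?_)
    have : -2 * (v:ℂ) - -s * v = (s - 2) * v := by ring
    rw [this, norm_mul, Complex.norm_real, Real.norm_of_nonneg hv.le]
  have h2 : ‖Complex.exp (-2 * v) - Complex.exp (-s * v)‖ ≤ Real.exp (-(3/2) * v) * 2 := by
    refine (norm_sub_le _ _).trans ?_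
    rw [Complex.norm_exp, Complex.norm_exp]
    have := Real.exp_le_exp.mpr ra
    have := Real.exp_le_exp.mpr rb
    linarith
  set D := ‖Complex.exp (-2 * v) - Complex.exp (-s * v)‖
  set e := Real.exp (-(3/2) * v) with he
  have he0 : 0 < e := Real.exp_pos _
  have hD0 : 0 ≤ D := norm_nonneg _
  have h3 : D ≤ e * √(2 * ‖s-2‖ * v) := by
    have : D ^ 2 ≤ (e * √(2 * ‖s-2‖ * v)) ^ 2 := by
      rw [mul_pow, Real.sq_sqrt (by positivity)]
      nlinarith [mul_le_mul h1 h2 hD0 (by positivity)]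
    exact (pow_le_pow_iff_left₀ hD0 (by positivity) two_ne_zero).mp this
  have h4 : gk v * e ≤ 2 * Real.exp (-(1/2) * v) / v := by
    have q : (1 + 2 * v) * e ≤ 2 * Real.exp (-(1/2) * v) := by
      have q1 : Real.exp (-(1/2) * v) = e * Real.exp v := by rw [he, ← Real.exp_add]; ring_nf
      have := Real.add_one_le_exp v
      rw [q1]; nlinarith
    calc gk v * e ≤ (1 + 2 * v) / v * e := mul_le_mul_of_nonneg_right (gk_le v hv) he0.le
      _ = (1 + 2 * v) * e / v := by ring
      _ ≤ _ := by gcongr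
  rw [norm_mul, Complex.norm_real, Real.norm_of_nonneg (gk_pos v hv).le]
  have h5 : √(2 * ‖s-2‖ * v) = √(2 * ‖s-2‖) * √v := Real.sqrt_mul (by positivity) _
  have h6 : v ^ (-1/2 : ℝ) = √v / v := by
    rw [show (-1/2 : ℝ) = 1/2 - 1 by norm_num, Real.rpow_sub hv, Real.rpow_one, Real.sqrt_eq_rpow]
  calc gk v * D ≤ gk v * (e * √(2 * ‖s-2‖ * v)) := mul_le_mul_of_nonneg_left h3 (gk_pos v hv).le
    _ = (gk v * e) * (√(2 * ‖s-2‖) * √v) := by rw [h5]; ring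
    _ ≤ (2 * Real.exp (-(1/2) * v) / v) * (√(2 * ‖s-2‖) * √v) := by gcongr
    _ = _ := by rw [h6]; ring

lemma half_int : IntegrableOn (fun v : ℝ => v ^ (-1/2 : ℝ) * Real.exp (-(1/2) * v)) (Set.Ioi 0) := by
  have := integrableOn_rpow_mul_exp_neg_mul_rpow (p := 1) (s := -1/2) (b := 1/2) (by norm_num) (by norm_num) (by norm_num)
  simpa using this

lemma gk_cont : ContinuousOn gk (Set.Ioi 0) := by
  unfold gk
  refine ContinuousOn.div continuousOn_const (by fun_prop) fun v hv => (one_sub_exp_pos v hv).ne'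

lemma gk_int_cont (s : ℂ) : ContinuousOn (fun v : ℝ => (gk v : ℂ) * (Complex.exp (-2 * v) - Complex.exp (-s * v))) (Set.Ioi 0) := by
  refine ContinuousOn.mul (Complex.continuous_ofReal.comp_continuousOn gk_cont) (by fun_prop)

lemma gk_integrable (s : ℂ) (hs : 3/2 ≤ s.re) :
    IntegrableOn (fun v : ℝ => (gk v : ℂ) * (Complex.exp (-2 * v) - Complex.exp (-s * v))) (Set.Ioi 0) := by
  refine Integrable.mono' (half_int.const_mul (2 * √(2 * ‖s - 2‖)))
    ((gk_int_cont s).aestronglyMeasurable measurableSet_Ioi) ?_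
  refine (ae_restrict_iff' measurableSet_Ioi).mpr (Eventually.of_forall fun v hv => ?_)
  exact gk_bound s hs v hv

lemma beta_v (z : ℂ) (ε : ℝ) (hz : 0 < z.re) (hε : 0 < ε) :
    IntegrableOn (fun v : ℝ => (gk v : ℂ) * ((1 - Real.exp (-2 * v)) ^ ε : ℝ) * Complex.exp (-(2*z) * v)) (Set.Ioi 0) ∧
    Complex.betaIntegral z ε = ∫ v in Set.Ioi (0:ℝ), (gk v : ℂ) * ((1 - Real.exp (-2 * v)) ^ ε : ℝ) * Complex.exp (-(2*z) * v) := by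
  set F : ℝ → ℂ := fun x => (x : ℂ) ^ (z - 1) * (1 - (x : ℂ)) ^ ((ε:ℂ) - 1) with hF
  have hd : ∀ v ∈ Set.Ioi (0:ℝ), HasDerivWithinAt (fun v : ℝ => Real.exp (-2 * v)) (Real.exp (-2 * v) * (-2)) (Set.Ioi 0) v := by
    intro v _
    have : HasDerivAt (fun v : ℝ => -2 * v) (-2) v := by simpa using (hasDerivAt_id v).const_mul (-2)
    exact this.exp.hasDerivWithinAt
  have hinj : Set.InjOn (fun v : ℝ => Real.exp (-2 * v)) (Set.Ioi 0) := by
    intro a _ b _ h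
    have := Real.exp_injective h
    linarith
  have himg : (fun v : ℝ => Real.exp (-2 * v)) '' Set.Ioi 0 = Set.Ioo 0 1 := by
    ext x
    constructor
    · rintro ⟨v, hv, rfl⟩
      have hv' : (0:ℝ) < v := hv
      exact ⟨Real.exp_pos _, Real.exp_lt_one_iff.mpr (by linarith)⟩
    · rintro ⟨h0, h1⟩
      refine ⟨-Real.log x / 2, ?_, ?_⟩
      · have := Real.log_neg h0 h1
        exact Set.mem_Ioi.mpr (by linarith)
      · change Real.exp _ = _
        rw [show -2 * (-Real.log x / 2) = Real.log x by ring, Real.exp_log h0]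
  have hcong : ∀ v ∈ Set.Ioi (0:ℝ), |Real.exp (-2 * v) * (-2)| • F (Real.exp (-2 * v)) =
      (gk v : ℂ) * ((1 - Real.exp (-2 * v)) ^ ε : ℝ) * Complex.exp (-(2*z) * v) := by
    intro v hv
    have hp := one_sub_exp_pos v hv
    have e1 : ((Real.exp (-2 * v) : ℝ) : ℂ) ^ (z - 1) = Complex.exp (-2 * v * (z - 1)) := by
      rw [Complex.cpow_def_of_ne_zero (by simp), ← Complex.ofReal_log (Real.exp_pos _).le, Real.log_exp]
      push_cast; ring_nf
    have e2 : (1 - ((Real.exp (-2 * v) : ℝ) : ℂ)) ^ ((ε:ℂ) - 1) = (((1 - Real.exp (-2*v)) ^ ε / (1 - Real.exp (-2*v)) : ℝ) : ℂ) := by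
      rw [← Real.rpow_sub_one hp.ne', Complex.ofReal_cpow hp.le]
      push_cast; rfl
    rw [hF]
    simp only
    rw [e1, e2, abs_mul, abs_of_pos (Real.exp_pos _), gk]
    have e3 : Complex.exp (-(2*z) * v) = Complex.exp (-2 * v) * Complex.exp (-2 * v * (z - 1)) := by
      rw [← Complex.exp_add]; ring_nf
    rw [e3]
    simp
    have : (1 - Complex.exp (-(2 * (v:ℂ)))) ≠ 0 := by
      have h := hp.ne'
      have : ((1 - Real.exp (-2*v) : ℝ) : ℂ) ≠ 0 := by exact_mod_cast h
      simpa using this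
    field_simp
  have hint : IntegrableOn F (Set.Ioo 0 1) := by
    have := Complex.betaIntegral_convergent hz (v := ε) (by simpa using hε)
    rw [intervalIntegrable_iff_integrableOn_Ioo_of_le zero_le_one] at this
    exact this
  constructor
  · rw [← himg, integrableOn_image_iff_integrableOn_abs_deriv_smul measurableSet_Ioi hd hinj] at hint
    exact hint.congr_fun hcong measurableSet_Ioi
  · rw [Complex.betaIntegral, intervalIntegral.integral_of_le zero_le_one, integral_Ioc_eq_integral_Ioo,
      ← himg, integral_image_eq_integral_abs_deriv_smul measurableSet_Ioi hd hinj]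
    exact setIntegral_congr_fun measurableSet_Ioi hcong

lemma gamma_ne (z : ℂ) (hz : 0 < z.re) : ∀ m : ℕ, z ≠ -m := by
  intro m hm
  have := congrArg Complex.re hm
  simp at this
  have h0 : (0:ℝ) ≤ m := m.cast_nonneg
  linarith

lemma beta_limit (z : ℂ) (hz : 0 < z.re) :
    Tendsto (fun ε : ℝ => Complex.betaIntegral 1 ε - Complex.betaIntegral z ε) (nhdsWithin 0 (Set.Ioi 0))
      (nhds (Complex.digamma z + Real.eulerMascheroniConstant)) := by
  have key : ∀ z : ℂ, 0 < z.re → HasDerivAt (fun ε : ℝ => Complex.Gamma z / Complex.Gamma (z + ε)) (- Complex.digamma z) 0 := by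
    intro z hz
    have hd : HasDerivAt Complex.Gamma (deriv Complex.Gamma z) z := (Complex.differentiableAt_Gamma z (gamma_ne z hz)).hasDerivAt
    have h0 : Complex.Gamma z ≠ 0 := Complex.Gamma_ne_zero (gamma_ne z hz)
    have hi : HasDerivAt (fun ε : ℝ => z + (ε:ℂ)) 1 0 := by
      exact (Complex.ofRealCLM.hasDerivAt (x := (0:ℝ))).const_add z
    have hd' : HasDerivAt Complex.Gamma (deriv Complex.Gamma z) (z + ((0:ℝ):ℂ)) := by simpa using hd
    have hc : HasDerivAt (fun ε : ℝ => Complex.Gamma (z + ε)) (deriv Complex.Gamma z * 1) 0 :=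
      HasDerivAt.comp (𝕜' := ℂ) (h := fun ε : ℝ => z + (ε:ℂ)) (0:ℝ) hd' hi
    have := (hasDerivAt_const (0:ℝ) (Complex.Gamma z)).div hc (by simpa using h0)
    convert! this using 1
    rw [Complex.digamma_def, logDeriv_apply]
    simp
    field_simp
  have hq := (key 1 (by simp)).sub (key z hz)
  rw [hasDerivAt_iff_tendsto_slope] at hq
  have hq2 := hq.mono_left (nhdsWithin_mono (0:ℝ) (fun x (hx : 0 < x) => hx.ne' : Set.Ioi (0:ℝ) ⊆ {0}ᶜ))
  have hΓ : Tendsto (fun ε : ℝ => Complex.Gamma (ε + 1)) (nhdsWithin 0 (Set.Ioi 0)) (nhds 1) := by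
    have c : ContinuousAt (fun ε : ℝ => Complex.Gamma (ε + 1)) 0 := by
      have := (Complex.differentiableAt_Gamma (((0:ℝ):ℂ) + 1) (gamma_ne _ (by simp))).continuousAt
      exact ContinuousAt.comp (f := fun ε : ℝ => (ε:ℂ) + 1) this (by fun_prop)
    have := c.tendsto
    simp only [Complex.ofReal_zero, zero_add, Complex.Gamma_one] at this
    exact this.mono_left nhdsWithin_le_nhds
  have h := hΓ.mul hq2
  rw [one_mul, Complex.digamma_one] at h
  have e : -(-(Real.eulerMascheroniConstant:ℂ)) - -Complex.digamma z = Complex.digamma z + Real.eulerMascheroniConstant := by ring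
  rw [e] at h
  refine h.congr' ?_
  filter_upwards [self_mem_nhdsWithin] with ε hε
  have hε0 : (0:ℝ) < ε := hε
  have hεc : (ε:ℂ) ≠ 0 := by exact_mod_cast hε0.ne'
  have hB : ∀ z : ℂ, 0 < z.re → Complex.betaIntegral z ε = Complex.Gamma (ε + 1) * (Complex.Gamma z / Complex.Gamma (z + ε)) / ε := by
    intro z hz
    have h1 := Complex.Gamma_mul_Gamma_eq_betaIntegral hz (t := ε) (by simpa using hε0)
    have h2 : Complex.Gamma (z + ε) ≠ 0 := Complex.Gamma_ne_zero (gamma_ne _ (by simp; linarith))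
    rw [Complex.Gamma_add_one _ hεc]
    field_simp
    rw [mul_comm (Complex.Gamma _) (Complex.Gamma z), h1, mul_comm]
  rw [hB 1 (by simp), hB z hz]
  simp only [slope, vsub_eq_sub, sub_zero, Pi.sub_apply, Complex.ofReal_zero, add_zero]
  rw [div_self (by simp), div_self (Complex.Gamma_ne_zero (gamma_ne z hz)), sub_self, sub_zero, Complex.real_smul]
  push_cast
  field_simp

theorem gauss_digamma (s : ℂ) (hs : 3/2 ≤ s.re) :
    Complex.digamma (s/2) = - Real.eulerMascheroniConstant +
      ∫ v in Set.Ioi (0:ℝ), (gk v : ℂ) * (Complex.exp (-2 * v) - Complex.exp (-s * v)) := by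
  have hz : 0 < (s/2).re := by simp; linarith
  have hT : Tendsto (fun ε : ℝ => Complex.betaIntegral 1 ε - Complex.betaIntegral (s/2) ε) (nhdsWithin 0 (Set.Ioi 0))
      (nhds (∫ v in Set.Ioi (0:ℝ), (gk v : ℂ) * (Complex.exp (-2 * v) - Complex.exp (-s * v)))) := by
    have h1 : Tendsto (fun ε : ℝ => ∫ v in Set.Ioi (0:ℝ), (((1 - Real.exp (-2 * v)) ^ ε : ℝ) : ℂ) * ((gk v : ℂ) * (Complex.exp (-2 * v) - Complex.exp (-s * v))))
      (nhdsWithin 0 (Set.Ioi 0)) (nhds (∫ v in Set.Ioi (0:ℝ), (gk v : ℂ) * (Complex.exp (-2 * v) - Complex.exp (-s * v)))) := by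
      refine tendsto_integral_filter_of_dominated_convergence _ ?_ ?_ ((gk_integrable s hs).norm) ?_
      · filter_upwards [self_mem_nhdsWithin] with ε hε
        refine ContinuousOn.aestronglyMeasurable ?_ measurableSet_Ioi
        refine ContinuousOn.mul ?_ (gk_int_cont s)
        refine Complex.continuous_ofReal.comp_continuousOn ?_
        refine ContinuousOn.rpow_const (by fun_prop) fun v hv => Or.inl (one_sub_exp_pos v hv).ne'
      · filter_upwards [self_mem_nhdsWithin] with ε hε
        have hε0 : (0:ℝ) < ε := hε
        refine (ae_restrict_iff' measurableSet_Ioi).mpr (Eventually.of_forall fun v hv => ?_)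
        have hp := one_sub_exp_pos v hv
        rw [norm_mul, Complex.norm_real, Real.norm_of_nonneg (by positivity)]
        refine mul_le_of_le_one_left (norm_nonneg _) ?_
        exact Real.rpow_le_one hp.le (by linarith [Real.exp_pos (-2*v)]) hε0.le
      · refine (ae_restrict_iff' measurableSet_Ioi).mpr (Eventually.of_forall fun v hv => ?_)
        have hp := one_sub_exp_pos v hv
        have : ContinuousAt (fun ε : ℝ => (1 - Real.exp (-2 * v)) ^ ε) 0 := Real.continuousAt_const_rpow hp.ne'
        have h2 := (Complex.continuous_ofReal.tendsto _).comp (this.tendsto.mono_left (nhdsWithin_le_nhds (s := Set.Ioi 0)))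
        have h3 := h2.mul_const ((gk v : ℂ) * (Complex.exp (-2 * v) - Complex.exp (-s * v)))
        simpa using h3
    refine h1.congr' ?_
    filter_upwards [self_mem_nhdsWithin] with ε hε
    obtain ⟨i1, e1⟩ := beta_v 1 ε (by simp) hε
    obtain ⟨i2, e2⟩ := beta_v (s/2) ε hz hε
    rw [e1, e2, ← integral_sub i1 i2]
    refine setIntegral_congr_fun measurableSet_Ioi fun v hv => ?_
    rw [show -(2 * (s/2)) * (v:ℂ) = -s * v by ring, show -(2 * (1:ℂ)) * (v:ℂ) = -2 * v by ring]
    ring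
  have := tendsto_nhds_unique hT (beta_limit (s/2) hz)
  rw [this]; ring

lemma exp_int_Ioi (c : ℂ) (hc : 0 < c.re) :
    IntegrableOn (fun v : ℝ => Complex.exp (-c * v)) (Set.Ioi 0) ∧
    ∫ v in Set.Ioi (0:ℝ), Complex.exp (-c * v) = 1 / c := by
  have h : (-c).re < 0 := by simpa using hc
  refine ⟨integrableOn_exp_mul_complex_Ioi h 0, ?_⟩
  rw [integral_exp_mul_complex_Ioi h 0]
  simp

lemma frullani_integrable (s : ℂ) (hs : 0 < s.re) :
    IntegrableOn (fun v : ℝ => (Complex.exp (-v) - Complex.exp (-s * v)) / v) (Set.Ioi 0) := by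
  set m := min 1 s.re with hm
  have hm0 : 0 < m := lt_min one_pos hs
  have hint : IntegrableOn (fun v : ℝ => ‖s - 1‖ * Real.exp (-m * v)) (Set.Ioi 0) :=
    (exp_neg_integrableOn_Ioi 0 hm0).const_mul _
  refine Integrable.mono' hint ?_ ?_
  · refine ContinuousOn.aestronglyMeasurable ?_ measurableSet_Ioi
    refine ContinuousOn.div (by fun_prop) (by fun_prop) fun v hv => ?_
    have : (0:ℝ) < v := hv
    exact_mod_cast this.ne'
  · refine (ae_restrict_iff' measurableSet_Ioi).mpr (Eventually.of_forall fun v hv => ?_)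
    have hv0 : (0:ℝ) < v := hv
    have := exp_sub_exp_le (-m * v) (-v) (-s * v) (by
      simp only [Complex.neg_re, Complex.ofReal_re]
      have : m ≤ 1 := min_le_left _ _
      nlinarith) (by
      have : m ≤ s.re := min_le_right _ _
      simp
      nlinarith)
    rw [norm_div, Complex.norm_real, Real.norm_of_nonneg hv0.le, div_le_iff₀ hv0]
    refine this.trans (le_of_eq ?_)
    have e : -(v:ℂ) - -s * v = (s - 1) * v := by ring
    rw [e, norm_mul, Complex.norm_real, Real.norm_of_nonneg hv0.le]
    ring

theorem frullani_c (s : ℂ) (hs : 0 < s.re) :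
    ∫ v in Set.Ioi (0:ℝ), (Complex.exp (-v) - Complex.exp (-s * v)) / v = Complex.log s := by
  set m := min 1 s.re with hm
  have hm0 : 0 < m := lt_min one_pos hs
  have hre : ∀ t ∈ Set.Icc (0:ℝ) 1, m ≤ (1 + t * (s - 1)).re := by
    intro t ht
    have e : (1 + (t:ℂ) * (s - 1)).re = (1 - t) * 1 + t * s.re := by simp; ring
    rw [e]
    have h1 : m ≤ 1 := min_le_left _ _
    have h2 : m ≤ s.re := min_le_right _ _
    have := ht.1
    have := ht.2
    nlinarith
  have hinner : ∀ v ∈ Set.Ioi (0:ℝ), (Complex.exp (-v) - Complex.exp (-s * v)) / v =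
      ∫ t in Set.Ioc (0:ℝ) 1, (s - 1) * Complex.exp (-(1 + t * (s - 1)) * v) := by
    intro v hv
    have hv0 : (0:ℝ) < v := hv
    have hvc : (v:ℂ) ≠ 0 := by exact_mod_cast hv0.ne'
    rw [← intervalIntegral.integral_of_le zero_le_one]
    have hd : ∀ t ∈ Set.uIcc (0:ℝ) 1, HasDerivAt (fun t : ℝ => -Complex.exp (-(1 + t * (s - 1)) * v) / v)
        ((s - 1) * Complex.exp (-(1 + t * (s - 1)) * v)) t := by
      intro t _
      have h1 : HasDerivAt (fun t : ℝ => -(1 + (t:ℂ) * (s - 1)) * v) (-(1 * (s - 1)) * v) t := by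
        have := (Complex.ofRealCLM.hasDerivAt (x := t))
        exact (((this.mul_const (s-1)).const_add 1).neg).mul_const (v:ℂ)
      have h2 := (h1.cexp.neg).div_const (v:ℂ)
      convert! h2 using 1
      field_simp
    rw [intervalIntegral.integral_eq_sub_of_hasDerivAt hd (by
      apply Continuous.intervalIntegrable; fun_prop)]
    simp
    ring
  rw [setIntegral_congr_fun measurableSet_Ioi hinner]
  rw [integral_integral_swap]
  · have h1 : ∀ t ∈ Set.Ioc (0:ℝ) 1, ∫ v in Set.Ioi (0:ℝ), (s - 1) * Complex.exp (-(1 + t * (s - 1)) * v) =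
        (s - 1) / (1 + t * (s - 1)) := by
      intro t ht
      rw [integral_const_mul, (exp_int_Ioi _ (lt_of_lt_of_le hm0 (hre t ⟨ht.1.le, ht.2⟩))).2]
      ring
    rw [setIntegral_congr_fun measurableSet_Ioc h1, ← intervalIntegral.integral_of_le zero_le_one]
    have hd : ∀ t ∈ Set.uIcc (0:ℝ) 1, HasDerivAt (fun t : ℝ => Complex.log (1 + t * (s - 1)))
        ((s - 1) / (1 + t * (s - 1))) t := by
      intro t ht
      rw [Set.uIcc_of_le zero_le_one] at ht
      have h1 : HasDerivAt (fun t : ℝ => (1 + (t:ℂ) * (s - 1))) (1 * (s - 1)) t := by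
        have := (Complex.ofRealCLM.hasDerivAt (x := t))
        exact ((this.mul_const (s-1)).const_add 1)
      rw [one_mul] at h1
      exact h1.clog_real (Or.inl (lt_of_lt_of_le hm0 (hre t ht)))
    rw [intervalIntegral.integral_eq_sub_of_hasDerivAt hd]
    · simp
    · refine ContinuousOn.intervalIntegrable ?_
      rw [Set.uIcc_of_le zero_le_one]
      refine ContinuousOn.div (by fun_prop) (by fun_prop) fun t ht h => ?_
      have := hre t ht
      rw [h] at this
      simp at this; linarith
  · have hprod : Integrable (fun p : ℝ × ℝ => ‖s - 1‖ * Real.exp (-m * p.1))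
        ((volume.restrict (Set.Ioi (0:ℝ))).prod (volume.restrict (Set.Ioc (0:ℝ) 1))) := by
      have h1 : Integrable (fun v : ℝ => ‖s - 1‖ * Real.exp (-m * v)) (volume.restrict (Set.Ioi (0:ℝ))) :=
        (exp_neg_integrableOn_Ioi 0 hm0).const_mul _
      have h2 : Integrable (fun _ : ℝ => (1:ℝ)) (volume.restrict (Set.Ioc (0:ℝ) 1)) := integrable_const _
      simpa using h1.mul_prod h2
    refine hprod.mono' ?_ ?_
    · refine Continuous.aestronglyMeasurable ?_
      unfold Function.uncurry
      fun_prop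
    · rw [Measure.prod_restrict]
      refine (ae_restrict_iff' (measurableSet_Ioi.prod measurableSet_Ioc)).mpr (Eventually.of_forall ?_)
      rintro ⟨v, t⟩ ⟨hv, ht⟩
      simp only [Function.uncurry]
      rw [norm_mul, Complex.norm_exp]
      refine mul_le_mul_of_nonneg_left (Real.exp_le_exp.mpr ?_) (norm_nonneg _)
      have h3 := hre t ⟨ht.1.le, ht.2⟩
      have hv0 : (0:ℝ) < v := hv
      rw [Complex.re_mul_ofReal, Complex.neg_re]
      nlinarith

/-- `b(v) = 2/(1-e^{-2v}) - 1/v` -/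
def bk (v : ℝ) : ℝ := gk v - 1 / v

lemma bk_le (v : ℝ) (hv : 0 < v) : bk v ≤ 2 := by
  have := gk_le v hv
  have e : (1 + 2 * v) / v = 1 / v + 2 := by field_simp
  rw [bk]; linarith

lemma bk_nonneg (v : ℝ) (hv : 0 < v) : 0 ≤ bk v := by
  have h := one_sub_exp_pos v hv
  have : 1 / v ≤ gk v := by
    rw [gk, div_le_div_iff₀ hv h]
    have := Real.add_one_le_exp (-2*v)
    linarith
  rw [bk]; linarith

lemma bk_mono : MonotoneOn bk (Set.Ioi 0) := by
  have hd : ∀ v ∈ Set.Ioi (0:ℝ), HasDerivAt bk (-(2 * (2 * Real.exp (-2*v))) / (1 - Real.exp (-2*v))^2 - (-1 / v^2)) v := by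
    intro v hv
    have hp := one_sub_exp_pos v hv
    have hv0 : v ≠ 0 := (Set.mem_Ioi.mp hv).ne'
    have h1 : HasDerivAt (fun v : ℝ => Real.exp (-2*v)) (Real.exp (-2*v) * (-2)) v := by
      have : HasDerivAt (fun v : ℝ => -2 * v) (-2) v := by simpa using (hasDerivAt_id v).const_mul (-2)
      exact this.exp
    have h2 := (hasDerivAt_const v (2:ℝ)).div (h1.const_sub 1) hp.ne'
    have h3 := (hasDerivAt_const v (1:ℝ)).div (hasDerivAt_id v) hv0
    have := h2.sub h3
    convert! this using 1
    simp; ring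
  refine monotoneOn_of_deriv_nonneg (convex_Ioi 0) (fun v hv => (hd v hv).continuousAt.continuousWithinAt)
    (fun v hv => ?_) (fun v hv => ?_)
  · rw [interior_Ioi] at hv; exact (hd v hv).differentiableAt.differentiableWithinAt
  · rw [interior_Ioi] at hv
    rw [(hd v hv).deriv]
    have hp := one_sub_exp_pos v hv
    have hv0 : 0 < v := hv
    have key : (2 * v * Real.exp (-v)) ≤ 1 - Real.exp (-2*v) := by
      have h1 := Real.self_le_sinh_iff.mpr hv0.le
      rw [Real.sinh_eq] at h1
      have e1 : Real.exp v * Real.exp (-v) = 1 := by rw [← Real.exp_add]; simp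
      have e2 : Real.exp (-v) * Real.exp (-v) = Real.exp (-2*v) := by rw [← Real.exp_add]; ring_nf
      nlinarith [Real.exp_pos (-v)]
    have e2 : Real.exp (-v) * Real.exp (-v) = Real.exp (-2*v) := by rw [← Real.exp_add]; ring_nf
    have sq : (2 * v * Real.exp (-v))^2 ≤ (1 - Real.exp (-2*v))^2 := by
      have : 0 ≤ 2 * v * Real.exp (-v) := by positivity
      gcongr
    have : (2 * (2 * Real.exp (-2*v))) / (1 - Real.exp (-2*v))^2 ≤ 1 / v^2 := by
      rw [div_le_div_iff₀ (by positivity) (by positivity)]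
      nlinarith
    rw [neg_div, neg_div]
    linarith

lemma bk_cont : ContinuousOn bk (Set.Ioi 0) := by
  unfold bk
  exact gk_cont.sub (ContinuousOn.div continuousOn_const continuousOn_id fun v hv => (Set.mem_Ioi.mp hv).ne')

lemma gk_eq (v : ℝ) : gk v = bk v + 1 / v := by rw [bk]; ring

def c0fn (v : ℝ) : ℝ := gk v * Real.exp (-2 * v) - Real.exp (-v) / v

lemma bk_exp_integrable (s : ℂ) (hs : 0 < s.re) :
    IntegrableOn (fun v : ℝ => (bk v : ℂ) * Complex.exp (-s * v)) (Set.Ioi 0) ∧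
    ‖∫ v in Set.Ioi (0:ℝ), (bk v : ℂ) * Complex.exp (-s * v)‖ ≤ 2 / s.re := by
  have hi : IntegrableOn (fun v : ℝ => 2 * Real.exp (-s.re * v)) (Set.Ioi 0) :=
    (exp_neg_integrableOn_Ioi 0 hs).const_mul _
  have hb : ∀ᵐ v ∂(volume.restrict (Set.Ioi (0:ℝ))), ‖(bk v : ℂ) * Complex.exp (-s * v)‖ ≤ 2 * Real.exp (-s.re * v) := by
    refine (ae_restrict_iff' measurableSet_Ioi).mpr (Eventually.of_forall fun v hv => ?_)
    rw [norm_mul, Complex.norm_exp, Complex.norm_real, Real.norm_of_nonneg (bk_nonneg v hv)]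
    simp only [Complex.re_mul_ofReal, Complex.neg_re]
    exact mul_le_mul_of_nonneg_right (bk_le v hv) (Real.exp_pos _).le
  constructor
  · refine hi.mono' (ContinuousOn.aestronglyMeasurable ?_ measurableSet_Ioi) hb
    exact ContinuousOn.mul (Complex.continuous_ofReal.comp_continuousOn bk_cont) (by fun_prop)
  · refine (norm_integral_le_of_norm_le hi hb).trans (le_of_eq ?_)
    rw [integral_const_mul]
    have := integral_exp_mul_Ioi (a := -s.re) (by linarith) 0
    rw [this]
    simp
    ring

lemma c0fn_eq (s : ℂ) (v : ℝ) : (c0fn v : ℂ) =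
    (gk v : ℂ) * (Complex.exp (-2 * v) - Complex.exp (-s * v)) - (Complex.exp (-v) - Complex.exp (-s * v)) / v
      + (bk v : ℂ) * Complex.exp (-s * v) := by
  have := gk_eq v
  rw [c0fn, this]
  push_cast
  ring

lemma c0_integrable_c : IntegrableOn (fun v : ℝ => (c0fn v : ℂ)) (Set.Ioi 0) := by
  have h1 := gk_integrable 2 (by norm_num)
  have h2 := frullani_integrable 2 (by norm_num)
  have h3 := (bk_exp_integrable 2 (by norm_num)).1
  refine ((h1.sub h2).add h3).congr (Eventually.of_forall fun v => ?_)
  simp only [Pi.add_apply, Pi.sub_apply]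
  rw [c0fn_eq 2]

lemma c0_eq (s : ℂ) (hs : 3/2 ≤ s.re) : ∫ v in Set.Ioi (0:ℝ), (c0fn v : ℂ) =
    Complex.digamma (s/2) + Real.eulerMascheroniConstant - Complex.log s +
      ∫ v in Set.Ioi (0:ℝ), (bk v : ℂ) * Complex.exp (-s * v) := by
  have h1 := gk_integrable s hs
  have h2 := frullani_integrable s (by linarith)
  have h3 := (bk_exp_integrable s (by linarith)).1
  simp_rw [c0fn_eq s]
  have h12 : IntegrableOn (fun v : ℝ => (gk v : ℂ) * (Complex.exp (-2 * v) - Complex.exp (-s * v)) -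
      (Complex.exp (-v) - Complex.exp (-s * v)) / v) (Set.Ioi 0) := h1.sub h2
  rw [integral_add h12 h3, integral_sub h1 h2, frullani_c s (by linarith), gauss_digamma s hs]
  ring

lemma c0_val_c : ∫ v in Set.Ioi (0:ℝ), (c0fn v : ℂ) = ((Real.eulerMascheroniConstant - Real.log 2 : ℝ) : ℂ) := by
  have hE : ∀ n : ℕ, ∫ v in Set.Ioi (0:ℝ), (c0fn v : ℂ) = (((harmonic n : ℝ) - Real.log (n + 1) - Real.log 2 : ℝ) : ℂ) +
      ∫ v in Set.Ioi (0:ℝ), (bk v : ℂ) * Complex.exp (-(2 * (n + 1)) * v) := by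
    intro n
    have hn : (0:ℝ) ≤ n := n.cast_nonneg
    have hre : ((2:ℂ) * (n + 1)).re = 2 * (n + 1) := by simp
    rw [c0_eq (2 * (n + 1)) (by rw [hre]; linarith)]
    congr 1
    rw [mul_div_cancel_left₀ _ (two_ne_zero), Complex.digamma_def, logDeriv_apply, Complex.deriv_Gamma_nat,
      Complex.Gamma_nat_eq_factorial]
    have e1 : Complex.log (2 * ((n:ℂ) + 1)) = ((Real.log (n+1) + Real.log 2 : ℝ) : ℂ) := by
      rw [← Real.log_mul (by positivity) (by norm_num), Complex.ofReal_log (by positivity)]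
      push_cast; ring_nf
    rw [e1]
    have : (n.factorial : ℂ) ≠ 0 := by exact_mod_cast n.factorial_ne_zero
    field_simp
    push_cast
    ring
  have hl1 : Tendsto (fun n : ℕ => ((((harmonic n : ℝ) - Real.log (n + 1) - Real.log 2 : ℝ) : ℂ))) atTop
      (nhds ((Real.eulerMascheroniConstant - Real.log 2 : ℝ) : ℂ)) := by
    refine (Complex.continuous_ofReal.tendsto _).comp ?_
    exact Real.tendsto_harmonic_sub_log_add_one.sub_const _
  have hl2 : Tendsto (fun n : ℕ => ∫ v in Set.Ioi (0:ℝ), (bk v : ℂ) * Complex.exp (-(2 * ((n:ℂ) + 1)) * v)) atTop (nhds 0) := by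
    refine squeeze_zero_norm (a := fun n : ℕ => 1 / ((n:ℝ) + 1)) (fun n => ?_) tendsto_one_div_add_atTop_nhds_zero_nat
    have hn : (0:ℝ) ≤ n := n.cast_nonneg
    have hre : ((2:ℂ) * (n + 1)).re = 2 * (n + 1) := by simp
    refine ((bk_exp_integrable (2 * (n+1)) (by rw [hre]; linarith)).2).trans (le_of_eq ?_)
    rw [hre]; field_simp
  have := hl1.add hl2
  rw [add_zero] at this
  exact tendsto_nhds_unique (tendsto_const_nhds.congr hE) this

lemma c0_integrable : IntegrableOn c0fn (Set.Ioi 0) := by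
  have := c0_integrable_c.re
  exact this.congr (Eventually.of_forall fun v => rfl)

lemma c0_val : ∫ v in Set.Ioi (0:ℝ), c0fn v = Real.eulerMascheroniConstant - Real.log 2 := by
  have := c0_val_c
  rw [integral_complex_ofReal] at this
  exact_mod_cast this

lemma osc (f : ℝ → ℝ) (B τ : ℝ) (hτ : 0 < τ) (hanti : AntitoneOn f (Set.Ioi 0)) (h0 : ∀ v ∈ Set.Ioi (0:ℝ), 0 ≤ f v)
    (hB : ∀ v ∈ Set.Ioi (0:ℝ), f v ≤ B) (hi : IntegrableOn f (Set.Ioi 0)) :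
    IntegrableOn (fun v => f v * Real.cos (τ * v)) (Set.Ioi 0) ∧
    |∫ v in Set.Ioi (0:ℝ), f v * Real.cos (τ * v)| ≤ π * B / τ := by
  set h := π / τ with hh
  have hh0 : 0 < h := by positivity
  have hτh : τ * h = π := by rw [hh]; field_simp
  have hB0 : 0 ≤ B := (h0 1 (Set.mem_Ioi.mpr one_pos)).trans (hB 1 (Set.mem_Ioi.mpr one_pos))
  have hcos : ∀ (g : ℝ → ℝ) (s : Set ℝ), IntegrableOn g s → IntegrableOn (fun v => g v * Real.cos (τ * v)) s := by
    intro g s hg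
    refine Integrable.mul_bdd (c := 1) hg (by fun_prop) (Eventually.of_forall fun v => ?_)
    rw [Real.norm_eq_abs]; exact Real.abs_cos_le_one _
  have hic := hcos f _ hi
  refine ⟨hic, ?_⟩
  have himg : (fun v : ℝ => v + h) ⁻¹' (Set.Ioi h) = Set.Ioi 0 := by ext v; simp
  have shift : ∀ g : ℝ → ℝ, ∫ v in Set.Ioi (0:ℝ), g (v + h) = ∫ v in Set.Ioi h, g v := by
    intro g
    have := (measurePreserving_add_right volume h).setIntegral_preimage_emb (measurableEmbedding_addRight h) g (Set.Ioi h)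
    rw [himg] at this
    exact this
  have hsub : Set.Ioi h ⊆ Set.Ioi (0:ℝ) := Set.Ioi_subset_Ioi hh0.le
  have hish : IntegrableOn (fun v => f (v + h)) (Set.Ioi 0) := by
    have := ((measurePreserving_add_right volume h).integrableOn_comp_preimage (measurableEmbedding_addRight h)
      (f := f) (s := Set.Ioi h)).mpr (hi.mono_set hsub)
    rw [himg] at this
    exact this
  have hun : Set.Ioc 0 h ∪ Set.Ioi h = Set.Ioi (0:ℝ) := Set.Ioc_union_Ioi_eq_Ioi hh0.le
  have split : ∀ g : ℝ → ℝ, IntegrableOn g (Set.Ioi 0) → ∫ v in Set.Ioi (0:ℝ), g v = (∫ v in Set.Ioc 0 h, g v) + ∫ v in Set.Ioi h, g v := by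
    intro g hg
    rw [← setIntegral_union (Set.Ioc_disjoint_Ioi le_rfl) measurableSet_Ioi (hg.mono_set Set.Ioc_subset_Ioi_self)
      (hg.mono_set hsub), hun]
  have e1 : ∫ v in Set.Ioi h, f v * Real.cos (τ * v) = - ∫ v in Set.Ioi (0:ℝ), f (v + h) * Real.cos (τ * v) := by
    rw [← shift, ← integral_neg]
    congr 1
    ext v
    rw [mul_add, hτh, Real.cos_add_pi]; ring
  have e2 : ∫ v in Set.Ioi (0:ℝ), (f v - f (v + h)) * Real.cos (τ * v) =
      (∫ v in Set.Ioi (0:ℝ), f v * Real.cos (τ * v)) - ∫ v in Set.Ioi (0:ℝ), f (v + h) * Real.cos (τ * v) := by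
    rw [← integral_sub hic (hcos _ _ hish)]
    congr 1; ext v; ring
  have hfin : volume (Set.Ioc 0 h) < ⊤ := by simp
  have b1 : |∫ v in Set.Ioc 0 h, f v * Real.cos (τ * v)| ≤ B * h := by
    have := norm_setIntegral_le_of_norm_le_const (μ := volume) (C := B) (f := fun v => f v * Real.cos (τ * v)) hfin (fun v hv => by
      rw [norm_mul, Real.norm_of_nonneg (h0 v hv.1), Real.norm_eq_abs]
      calc f v * |Real.cos (τ * v)| ≤ f v * 1 := mul_le_mul_of_nonneg_left (Real.abs_cos_le_one _) (h0 v hv.1)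
        _ ≤ B := by rw [mul_one]; exact hB v hv.1)
    simpa [hh0.le] using this
  have b2 : |∫ v in Set.Ioi (0:ℝ), (f v - f (v + h)) * Real.cos (τ * v)| ≤ ∫ v in Set.Ioi (0:ℝ), (f v - f (v + h)) := by
    rw [← Real.norm_eq_abs]
    refine norm_integral_le_of_norm_le (hi.sub hish) ?_
    refine (ae_restrict_iff' measurableSet_Ioi).mpr (Eventually.of_forall fun v hv => ?_)
    have hv0 : (0:ℝ) < v := hv
    have hd : 0 ≤ f v - f (v + h) := sub_nonneg.mpr (hanti hv (show (0:ℝ) < v + h by linarith) (by linarith))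
    rw [norm_mul, Real.norm_of_nonneg hd, Real.norm_eq_abs]
    exact mul_le_of_le_one_right hd (Real.abs_cos_le_one _)
  have b3 : ∫ v in Set.Ioi (0:ℝ), (f v - f (v + h)) ≤ B * h := by
    rw [integral_sub hi hish, shift f, split f hi, add_sub_cancel_right]
    have := norm_setIntegral_le_of_norm_le_const (μ := volume) (C := B) (f := f) hfin (fun v hv => by
      rw [Real.norm_of_nonneg (h0 v hv.1)]; exact hB v hv.1)
    have h2 := (le_abs_self _).trans this
    simpa [hh0.le] using h2
  have sp := split _ hic
  rw [e1] at sp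
  set I := ∫ v in Set.Ioi (0:ℝ), f v * Real.cos (τ * v)
  set X := ∫ v in Set.Ioc 0 h, f v * Real.cos (τ * v)
  set Y := ∫ v in Set.Ioi (0:ℝ), f (v + h) * Real.cos (τ * v)
  rw [e2] at b2
  have h2I : 2 * I = X + (I - Y) := by linarith
  have : |2 * I| ≤ 2 * (B * h) := by
    rw [h2I]
    refine (abs_add_le _ _).trans ?_
    linarith
  rw [abs_mul, abs_two] at this
  have e3 : π * B / τ = B * h := by rw [hh]; ring
  rw [e3]; linarith

def kk (L v : ℝ) : ℝ := max (1 - v / L) 0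

lemma kk_nonneg (L v : ℝ) : 0 ≤ kk L v := le_max_right _ _
lemma kk_le (L v : ℝ) (hL : 0 < L) (hv : 0 ≤ v) : kk L v ≤ 1 := by
  refine max_le ?_ zero_le_one
  have : 0 ≤ v / L := by positivity
  linarith
lemma kk_anti (L : ℝ) (hL : 0 < L) : Antitone (kk L) := by
  intro a b hab
  unfold kk
  refine max_le_max ?_ le_rfl
  have : a / L ≤ b / L := by gcongr
  linarith
lemma kk_cont (L : ℝ) : Continuous (kk L) := by unfold kk; fun_prop

lemma jk_eq (L v : ℝ) (hL : 0 < L) (hv : 0 < v) : (1 - kk L v) / v = min (1 / L) (1 / v) := by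
  unfold kk
  rcases le_total v L with h | h
  · rw [max_eq_left, min_eq_left]
    · field_simp; ring
    · exact one_div_le_one_div_of_le hv h
    · rw [sub_nonneg, div_le_one hL]; exact h
  · rw [max_eq_right, min_eq_right, sub_zero]
    · exact one_div_le_one_div_of_le hL h
    · rw [sub_nonpos, le_div_iff₀ hL]; linarith

/-- oscillation lemma with weight e^{-v/2} -/
lemma osc_exp (g : ℝ → ℝ) (B τ : ℝ) (hτ : 0 < τ) (hanti : AntitoneOn g (Set.Ioi 0)) (h0 : ∀ v ∈ Set.Ioi (0:ℝ), 0 ≤ g v)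
    (hB : ∀ v ∈ Set.Ioi (0:ℝ), g v ≤ B) (hc : ContinuousOn g (Set.Ioi 0)) :
    IntegrableOn (fun v => Real.exp (-(1/2) * v) * g v * Real.cos (τ * v)) (Set.Ioi 0) ∧
    |∫ v in Set.Ioi (0:ℝ), Real.exp (-(1/2) * v) * g v * Real.cos (τ * v)| ≤ π * B / τ := by
  refine osc _ B τ hτ ?_ ?_ ?_ ?_
  · intro a ha b hb hab
    refine mul_le_mul (Real.exp_le_exp.mpr (by linarith)) (hanti ha hb hab) (h0 b hb) (Real.exp_pos _).le
  · intro v hv; exact mul_nonneg (Real.exp_pos _).le (h0 v hv)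
  · intro v hv
    have hv0 : (0:ℝ) < v := hv
    refine (mul_le_of_le_one_left (h0 v hv) ?_).trans (hB v hv)
    exact Real.exp_le_one_iff.mpr (by linarith)
  · have hi : IntegrableOn (fun v : ℝ => B * Real.exp (-(1/2) * v)) (Set.Ioi 0) :=
      (exp_neg_integrableOn_Ioi 0 (by norm_num)).const_mul _
    refine hi.mono' (ContinuousOn.aestronglyMeasurable (ContinuousOn.mul (by fun_prop) hc) measurableSet_Ioi) ?_
    refine (ae_restrict_iff' measurableSet_Ioi).mpr (Eventually.of_forall fun v hv => ?_)
    rw [norm_mul, Real.norm_of_nonneg (Real.exp_pos _).le, Real.norm_of_nonneg (h0 v hv), mul_comm]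
    exact mul_le_mul_of_nonneg_right (hB v hv) (Real.exp_pos _).le

theorem psi_est (L τ : ℝ) (hL : 1/2 ≤ L) (hτ : 1 ≤ τ) :
    |(- Real.eulerMascheroniConstant + ∫ v in Set.Ioi (0:ℝ), gk v * (Real.exp (-2 * v) -
      kk L v * Real.exp (-(1/2) * v) * Real.cos (τ * v))) - Real.log (τ / 2)| ≤ 30 / τ := by
  have hL0 : 0 < L := by linarith
  have hτ0 : 0 < τ := by linarith
  set s : ℂ := 1/2 + τ * Complex.I with hs
  have hsre : s.re = 1/2 := by simp [hs]
  have hsim : s.im = τ := by simp [hs]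
  have hjc : ContinuousOn (fun v : ℝ => min (1 / L) (1 / v)) (Set.Ioi 0) := by
    refine ContinuousOn.inf continuousOn_const ?_
    exact ContinuousOn.div continuousOn_const continuousOn_id fun v hv => (Set.mem_Ioi.mp hv).ne'
  obtain ⟨i1, b1⟩ := osc_exp (fun v => min (1 / L) (1 / v)) 2 τ hτ0
    (by
      intro a ha b hb hab
      exact min_le_min le_rfl (one_div_le_one_div_of_le ha hab))
    (by
      intro v hv
      have hv0 : (0:ℝ) < v := hv
      positivity)
    (by
      intro v hv
      refine (min_le_left _ _).trans ?_
      rw [div_le_iff₀ hL0]; linarith) hjc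
  obtain ⟨i2, b2⟩ := osc_exp (kk L) 1 τ hτ0 ((kk_anti L hL0).antitoneOn _) (fun v _ => kk_nonneg L v)
    (fun v hv => kk_le L v hL0 (Set.mem_Ioi.mp hv).le) (kk_cont L).continuousOn
  obtain ⟨i3, b3⟩ := osc_exp (fun v => kk L v * (2 - bk v)) 2 τ hτ0
    (by
      intro a ha b hb hab
      have h1 := kk_anti L hL0 hab
      have h2 := bk_mono ha hb hab
      have h3 := bk_le b hb
      exact mul_le_mul h1 (by linarith) (by linarith) (kk_nonneg _ _))
    (fun v hv => mul_nonneg (kk_nonneg _ _) (by linarith [bk_le v hv]))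
    (fun v hv => by
      have h1 := kk_le L v hL0 (Set.mem_Ioi.mp hv).le
      have h2 := bk_nonneg v hv
      have h3 := bk_le v hv
      nlinarith [kk_nonneg L v])
    ((kk_cont L).continuousOn.mul (continuousOn_const.sub bk_cont))
  have iF := (frullani_integrable s (by rw [hsre]; norm_num)).re
  have eF : ∫ v in Set.Ioi (0:ℝ), ((Complex.exp (-v) - Complex.exp (-s * v)) / v).re = (Complex.log s).re := by
    rw [← frullani_c s (by rw [hsre]; norm_num)]
    exact integral_re (frullani_integrable s (by rw [hsre]; norm_num))
  have hrw : ∀ v ∈ Set.Ioi (0:ℝ), gk v * (Real.exp (-2 * v) - kk L v * Real.exp (-(1/2) * v) * Real.cos (τ * v)) =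
      c0fn v + ((Complex.exp (-v) - Complex.exp (-s * v)) / v).re +
      ((Real.exp (-(1/2) * v) * min (1 / L) (1 / v) * Real.cos (τ * v)) -
       2 * (Real.exp (-(1/2) * v) * kk L v * Real.cos (τ * v)) +
       Real.exp (-(1/2) * v) * (kk L v * (2 - bk v)) * Real.cos (τ * v)) := by
    intro v hv
    have hv0 : (0:ℝ) < v := hv
    have e1 : ((Complex.exp (-v) - Complex.exp (-s * v)) / v).re = (Real.exp (-v) - Real.exp (-(1/2) * v) * Real.cos (τ * v)) / v := by
      rw [Complex.div_ofReal_re, Complex.sub_re, Complex.exp_re, Complex.exp_re]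
      simp [hs, Real.cos_neg]
    rw [e1, ← jk_eq L v hL0 hv0, c0fn, gk_eq v]
    field_simp
    ring
  rw [setIntegral_congr_fun measurableSet_Ioi hrw]
  have iF' : IntegrableOn (fun v : ℝ => ((Complex.exp (-v) - Complex.exp (-s * v)) / v).re) (Set.Ioi 0) := iF
  have hsplit : ∫ v in Set.Ioi (0:ℝ), (c0fn v + ((Complex.exp (-v) - Complex.exp (-s * v)) / v).re +
      ((Real.exp (-(1/2) * v) * min (1 / L) (1 / v) * Real.cos (τ * v)) -
       2 * (Real.exp (-(1/2) * v) * kk L v * Real.cos (τ * v)) +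
       Real.exp (-(1/2) * v) * (kk L v * (2 - bk v)) * Real.cos (τ * v))) =
      Real.eulerMascheroniConstant - Real.log 2 + (Complex.log s).re +
      ((∫ v in Set.Ioi (0:ℝ), Real.exp (-(1/2) * v) * min (1 / L) (1 / v) * Real.cos (τ * v)) -
       2 * (∫ v in Set.Ioi (0:ℝ), Real.exp (-(1/2) * v) * kk L v * Real.cos (τ * v)) +
       ∫ v in Set.Ioi (0:ℝ), Real.exp (-(1/2) * v) * (kk L v * (2 - bk v)) * Real.cos (τ * v)) := by
    have j1 : IntegrableOn (fun v : ℝ => c0fn v + ((Complex.exp (-v) - Complex.exp (-s * v)) / v).re) (Set.Ioi 0) :=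
      c0_integrable.add iF'
    have j2 : IntegrableOn (fun v : ℝ => (Real.exp (-(1/2) * v) * min (1 / L) (1 / v) * Real.cos (τ * v)) -
       2 * (Real.exp (-(1/2) * v) * kk L v * Real.cos (τ * v))) (Set.Ioi 0) := i1.sub (i2.const_mul 2)
    have j3 : IntegrableOn (fun v : ℝ => (Real.exp (-(1/2) * v) * min (1 / L) (1 / v) * Real.cos (τ * v)) -
       2 * (Real.exp (-(1/2) * v) * kk L v * Real.cos (τ * v)) +
       Real.exp (-(1/2) * v) * (kk L v * (2 - bk v)) * Real.cos (τ * v)) (Set.Ioi 0) := j2.add i3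
    rw [integral_add j1 j3, integral_add c0_integrable iF', integral_add j2 i3, integral_sub i1 (i2.const_mul 2), integral_const_mul, c0_val, eF]
  rw [hsplit, Complex.log_re]
  have hn : ‖s‖ = √(1/4 + τ^2) := by
    rw [Complex.norm_def, Complex.normSq_apply, hsre, hsim]
    congr 1; ring
  have hlog : |Real.log ‖s‖ - Real.log τ| ≤ 1 / τ := by
    have e : Real.log ‖s‖ - Real.log τ = Real.log (1 + 1 / (4 * τ^2)) / 2 := by
      rw [hn, Real.log_sqrt (by positivity), show 1/4 + τ^2 = τ^2 * (1 + 1 / (4 * τ^2)) by field_simp; ring,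
        Real.log_mul (by positivity) (by positivity), Real.log_pow]
      push_cast; ring
    have hp : 0 ≤ 1 / (4 * τ^2) := by positivity
    have h1 : 0 ≤ Real.log (1 + 1 / (4 * τ^2)) := Real.log_nonneg (by linarith)
    have h2 := Real.log_le_sub_one_of_pos (show 0 < 1 + 1 / (4 * τ^2) by positivity)
    rw [e, abs_of_nonneg (by linarith)]
    have h3 : 1 / (4 * τ^2) ≤ 1 / τ := by
      apply one_div_le_one_div_of_le hτ0; nlinarith
    linarith
  rw [Real.log_div hτ0.ne' (by norm_num)]
  set X1 := ∫ v in Set.Ioi (0:ℝ), Real.exp (-(1/2) * v) * min (1 / L) (1 / v) * Real.cos (τ * v)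
  set X2 := ∫ v in Set.Ioi (0:ℝ), Real.exp (-(1/2) * v) * kk L v * Real.cos (τ * v)
  set X3 := ∫ v in Set.Ioi (0:ℝ), Real.exp (-(1/2) * v) * (kk L v * (2 - bk v)) * Real.cos (τ * v)
  have hpi : π / τ ≤ 4 * (1 / τ) := by
    rw [div_eq_mul_one_div]
    exact mul_le_mul_of_nonneg_right Real.pi_le_four (by positivity)
  have c1 : |X1| ≤ 8 * (1/τ) := b1.trans (by rw [mul_div_right_comm]; linarith)
  have c2 : |X2| ≤ 4 * (1/τ) := b2.trans (by rw [mul_div_right_comm]; linarith)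
  have c3 : |X3| ≤ 8 * (1/τ) := b3.trans (by rw [mul_div_right_comm]; linarith)
  have e30 : 30 / τ = 30 * (1/τ) := by ring
  have ht : 0 < 1/τ := by positivity
  rw [e30]
  rw [abs_le] at *
  constructor <;> linarith [c1.1, c1.2, c2.1, c2.2, c3.1, c3.2, hlog.1, hlog.2]

def jj (L : ℝ) (c : ℂ) : ℂ := ∫ v in Set.Ioi (0:ℝ), (kk L v : ℂ) * Complex.exp (c * v)

def jf (L : ℝ) (c : ℂ) : ℂ := (Complex.exp (c * L) - 1 - c * L) / (c^2 * L)

lemma kk_eq_zero (L v : ℝ) (hL : 0 < L) (hv : L ≤ v) : kk L v = 0 := by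
  unfold kk
  apply max_eq_right
  rw [sub_nonpos, le_div_iff₀ hL]; linarith

lemma kk_eq_of_le (L v : ℝ) (hL : 0 < L) (hv : v ≤ L) : kk L v = 1 - v / L := by
  unfold kk
  apply max_eq_left
  rw [sub_nonneg, div_le_one hL]; exact hv

lemma jj_interval (L : ℝ) (hL : 0 < L) (c : ℂ) : jj L c = ∫ v in (0:ℝ)..L, (1 - (v:ℂ) / L) * Complex.exp (c * v) := by
  rw [jj, intervalIntegral.integral_of_le hL.le]
  rw [setIntegral_eq_of_subset_of_forall_sdiff_eq_zero (s := Set.Ioc 0 L) measurableSet_Ioi Set.Ioc_subset_Ioi_self]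
  · refine setIntegral_congr_fun measurableSet_Ioc fun v hv => ?_
    rw [kk_eq_of_le L v hL hv.2]
    push_cast; ring
  · intro v hv
    have : L ≤ v := by
      by_contra h
      exact hv.2 ⟨hv.1, (not_le.mp h).le⟩
    rw [kk_eq_zero L v hL this]; simp

lemma jj_eq (L : ℝ) (hL : 0 < L) (c : ℂ) (hc : c ≠ 0) : jj L c = jf L c := by
  rw [jj_interval L hL]
  have hLc : (L:ℂ) ≠ 0 := by exact_mod_cast hL.ne'
  have hd : ∀ v : ℝ, HasDerivAt (fun v : ℝ => ((1 - (v:ℂ) / L) / c + 1 / (c^2 * L)) * Complex.exp (c * v))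
      ((1 - (v:ℂ) / L) * Complex.exp (c * v)) v := by
    intro v
    have h1 : HasDerivAt (fun v : ℂ => ((1 - v / L) / c + 1 / (c^2 * L)) * Complex.exp (c * v))
      ((-(1 / L) / c) * Complex.exp (c * v) + ((1 - v / L) / c + 1 / (c^2 * L)) * (Complex.exp (c * v) * (c * 1))) (v:ℂ) := by
      refine HasDerivAt.mul ?_ (((hasDerivAt_id _).const_mul c).cexp)
      exact ((((hasDerivAt_id (v:ℂ)).div_const (L:ℂ)).const_sub 1).div_const c).add_const _
    convert! h1.comp_ofReal using 1
    field_simp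
    ring
  rw [intervalIntegral.integral_eq_sub_of_hasDerivAt (fun v _ => hd v)
    (Continuous.intervalIntegrable (by fun_prop) _ _), jf]
  simp only [Complex.ofReal_zero, mul_zero, Complex.exp_zero, zero_div]
  field_simp
  ring

lemma jj_zero (L : ℝ) (hL : 0 < L) : jj L 0 = L / 2 := by
  rw [jj_interval L hL]
  have hLc : (L:ℂ) ≠ 0 := by exact_mod_cast hL.ne'
  have hd : ∀ v : ℝ, HasDerivAt (fun v : ℝ => (v:ℂ) - (v:ℂ)^2 / (2 * L))
      ((1 - (v:ℂ) / L) * Complex.exp (0 * v)) v := by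
    intro v
    have h0 : HasDerivAt (fun v : ℂ => v^2) (2 * (v:ℂ)) (v:ℂ) := by
      simpa using hasDerivAt_pow 2 (v:ℂ)
    have h1 : HasDerivAt (fun v : ℂ => v - v^2 / (2 * L)) (1 - (2 * v) / (2 * L) : ℂ) (v:ℂ) :=
      (hasDerivAt_id (v:ℂ)).sub (h0.div_const (2 * (L:ℂ)))
    convert! h1.comp_ofReal using 1
    simp
    field_simp
  rw [intervalIntegral.integral_eq_sub_of_hasDerivAt (fun v _ => hd v)
    (Continuous.intervalIntegrable (by fun_prop) _ _)]
  simp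
  field_simp
  ring

lemma jj_imag (L : ℝ) (hL : 0 < L) (u : ℝ) : (jj L (u * Complex.I)).re = L / 2 * sincSq (u * L / 2) := by
  by_cases hu : u = 0
  · subst hu
    simp [jj_zero L hL, sincSq]
  · have hc : (u:ℂ) * Complex.I ≠ 0 := by simp [hu]
    rw [jj_eq L hL _ hc, jf]
    have hne : u * L / 2 ≠ 0 := by positivity
    rw [sincSq, if_neg hne]
    have e1 : ((u:ℂ) * Complex.I)^2 * L = ((-(u^2 * L) : ℝ) : ℂ) := by
      rw [mul_pow, Complex.I_sq]; push_cast; ring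
    have e2 : (Complex.exp ((u:ℂ) * Complex.I * L) - 1 - (u:ℂ) * Complex.I * L).re = Real.cos (u * L) - 1 := by
      simp [Complex.exp_re]
    rw [e1, Complex.div_ofReal_re, e2]
    have e3 : Real.cos (u * L) = 1 - 2 * Real.sin (u * L / 2)^2 := by
      rw [show u * L = 2 * (u * L / 2) by ring, Real.cos_two_mul, Real.cos_sq']
      ring_nf
    rw [e3]
    field_simp
    ring

def FF (L : ℝ) (v : ℝ) : ℂ := ((kk L |v| * Real.exp |v| : ℝ) : ℂ)

def cc (w : ℝ) : ℂ := 1 + 2 * π * w * Complex.I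

def Gr (L w : ℝ) : ℝ := 2 * (jf L (cc w)).re

lemma cc_re (w : ℝ) : (cc w).re = 1 := by simp [cc]
lemma cc_im (w : ℝ) : (cc w).im = 2 * π * w := by simp [cc]
lemma cc_ne (w : ℝ) : cc w ≠ 0 := by
  intro h; have := cc_re w; rw [h] at this; simp at this

lemma FF_cont (L : ℝ) : Continuous (FF L) := by
  unfold FF
  have := kk_cont L
  fun_prop

lemma FF_supp (L : ℝ) (hL : 0 < L) : HasCompactSupport (FF L) := by
  refine HasCompactSupport.intro (isCompact_Icc (a := -L) (b := L)) fun v hv => ?_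
  have : L ≤ |v| := by
    by_contra h
    rw [not_le, abs_lt] at h
    exact hv ⟨h.1.le, h.2.le⟩
  simp [FF, kk_eq_zero L _ hL this]

lemma FF_int (L : ℝ) (hL : 0 < L) : Integrable (FF L) :=
  (FF_cont L).integrable_of_hasCompactSupport (FF_supp L hL)

open scoped FourierTransform in
lemma FF_fourier (L : ℝ) (hL : 0 < L) (w : ℝ) : 𝓕 (FF L) w = (Gr L w : ℂ) := by
  rw [Real.fourier_real_eq_integral_exp_smul]
  have hi : Integrable (fun v : ℝ => Complex.exp (((-2 * π * v * w : ℝ) : ℂ) * Complex.I) • FF L v) := by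
    refine Continuous.integrable_of_hasCompactSupport ?_ ?_
    · have := FF_cont L
      fun_prop
    · exact HasCompactSupport.smul_left (f := fun v : ℝ => Complex.exp (((-2 * π * v * w : ℝ) : ℂ) * Complex.I)) (FF_supp L hL)
  rw [← intervalIntegral.integral_Iic_add_Ioi (b := 0) hi.integrableOn hi.integrableOn]
  have e1 : ∫ v in Set.Iic (0:ℝ), Complex.exp (((-2 * π * v * w : ℝ) : ℂ) * Complex.I) • FF L v = jj L (cc w) := by
    rw [← neg_zero, ← integral_comp_neg_Ioi, jj]
    refine setIntegral_congr_fun measurableSet_Ioi fun v hv => ?_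
    have hv0 : (0:ℝ) < v := hv
    simp only [FF, abs_neg, abs_of_pos hv0, smul_eq_mul]
    push_cast
    rw [mul_left_comm, ← Complex.exp_add]
    congr 2
    simp only [cc]; ring
  have e2 : ∫ v in Set.Ioi (0:ℝ), Complex.exp (((-2 * π * v * w : ℝ) : ℂ) * Complex.I) • FF L v = jj L (starRingEnd ℂ (cc w)) := by
    rw [jj]
    refine setIntegral_congr_fun measurableSet_Ioi fun v hv => ?_
    have hv0 : (0:ℝ) < v := hv
    simp only [FF, abs_of_pos hv0, smul_eq_mul]
    push_cast
    rw [mul_left_comm, ← Complex.exp_add]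
    congr 2
    simp [cc, show (starRingEnd ℂ) 2 = 2 from Complex.conj_ofNat 2]; ring
  rw [e1, e2, jj_eq L hL _ (cc_ne w), jj_eq L hL _ (by simpa using cc_ne w)]
  have e3 : jf L (starRingEnd ℂ (cc w)) = starRingEnd ℂ (jf L (cc w)) := by
    simp [jf, ← Complex.exp_conj]
  rw [e3, Complex.add_conj, Gr]

lemma Gr_cont (L : ℝ) (hL : 0 < L) : Continuous (Gr L) := by
  have hLc : (L:ℂ) ≠ 0 := by exact_mod_cast hL.ne'
  have h : Continuous cc := by unfold cc; fun_prop
  unfold Gr jf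
  refine continuous_const.mul (Complex.continuous_re.comp ?_)
  refine Continuous.div (by fun_prop) (by fun_prop) fun w => mul_ne_zero (pow_ne_zero _ (cc_ne w)) hLc

lemma Gr_bound (L : ℝ) (hL : 0 < L) : ∃ C : ℝ, 0 ≤ C ∧ ∀ w, |Gr L w| ≤ C * (1 + ‖w‖)^(-2:ℝ) := by
  refine ⟨4 * ((Real.exp L + 1) / L + 1), by positivity, fun w => ?_⟩
  have hLc : (L:ℂ) ≠ 0 := by exact_mod_cast hL.ne'
  have hc := cc_ne w
  have hn : ‖cc w‖^2 = 1 + (2 * π * w)^2 := by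
    rw [← Complex.normSq_eq_norm_sq, Complex.normSq_apply, cc_re, cc_im]; ring
  have e : jf L (cc w) = (Complex.exp (cc w * L) - 1) / ((cc w)^2 * L) - (cc w)⁻¹ := by
    unfold jf; field_simp
  have h1 : ‖(Complex.exp (cc w * L) - 1) / ((cc w)^2 * L)‖ ≤ (Real.exp L + 1) / L / ‖cc w‖^2 := by
    rw [norm_div, norm_mul, norm_pow, Complex.norm_real, Real.norm_of_nonneg hL.le, div_div, mul_comm L]
    gcongr
    refine (norm_sub_le _ _).trans ?_
    rw [Complex.norm_exp]
    simp [cc_re]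
  have h2 : ((cc w)⁻¹).re = 1 / ‖cc w‖^2 := by
    rw [Complex.inv_re, cc_re, Complex.normSq_eq_norm_sq]
  have h3 := (Complex.abs_re_le_norm _).trans h1
  have hpos : 0 < ‖cc w‖^2 := by rw [hn]; positivity
  have h4 : |Gr L w| ≤ 2 * ((Real.exp L + 1) / L + 1) / ‖cc w‖^2 := by
    rw [Gr, e, Complex.sub_re, h2, abs_mul, abs_two]
    have h5 := abs_sub ((Complex.exp (cc w * L) - 1) / ((cc w)^2 * L)).re (1 / ‖cc w‖^2)
    rw [abs_of_nonneg (show 0 ≤ 1 / ‖cc w‖^2 by positivity)] at h5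
    have e6 : 2 * ((Real.exp L + 1) / L + 1) / ‖cc w‖^2 = 2 * ((Real.exp L + 1) / L / ‖cc w‖^2 + 1 / ‖cc w‖^2) := by ring
    rw [e6]; linarith
  refine h4.trans ?_
  rw [Real.rpow_neg (by positivity), ← div_eq_mul_inv, div_le_div_iff₀ hpos (by positivity), hn]
  have hp : (1 + ‖w‖)^(2:ℝ) = (1 + |w|)^2 := by norm_cast
  rw [hp]
  have hpi : 1 ≤ (2 * π)^2 := by nlinarith [Real.pi_gt_three]
  have hw : (1 + |w|)^2 ≤ 2 * (1 + (2 * π * w)^2) := by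
    have h7 : w^2 ≤ (2 * π * w)^2 := by rw [mul_pow (2*π)]; nlinarith [sq_nonneg w]
    nlinarith [sq_nonneg (1 - |w|), sq_abs w]
  have hK : 0 ≤ 2 * ((Real.exp L + 1) / L + 1) := by positivity
  calc 2 * ((Real.exp L + 1) / L + 1) * (1 + |w|)^2 ≤ 2 * ((Real.exp L + 1) / L + 1) * (2 * (1 + (2 * π * w)^2)) :=
        mul_le_mul_of_nonneg_left hw hK
    _ = _ := by ring

lemma Gr_int (L : ℝ) (hL : 0 < L) : Integrable (Gr L) := by
  obtain ⟨C, hC, h⟩ := Gr_bound L hL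
  have := (integrable_one_add_norm (E := ℝ) (μ := volume) (r := 2) (by simp)).const_mul C
  exact this.mono' (Gr_cont L hL).aestronglyMeasurable (Eventually.of_forall fun w => h w)

lemma Gr_half_int (L : ℝ) (hL : 0 < L) : Integrable (fun w => |Gr L w| * √(1 + ‖w‖)) := by
  obtain ⟨C, hC, h⟩ := Gr_bound L hL
  have := (integrable_one_add_norm (E := ℝ) (μ := volume) (r := 3/2) (by norm_num)).const_mul C
  have hc := Gr_cont L hL
  refine this.mono' (Continuous.aestronglyMeasurable (by fun_prop)) (Eventually.of_forall fun w => ?_)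
  rw [Real.norm_of_nonneg (by positivity)]
  have hp : 0 < 1 + ‖w‖ := by positivity
  calc |Gr L w| * √(1 + ‖w‖) ≤ C * (1 + ‖w‖)^(-2:ℝ) * √(1 + ‖w‖) := mul_le_mul_of_nonneg_right (h w) (Real.sqrt_nonneg _)
    _ = C * (1 + ‖w‖)^(-(3/2):ℝ) := by
        rw [Real.sqrt_eq_rpow, mul_assoc, ← Real.rpow_add hp]; norm_num

open scoped FourierTransform in
lemma Gr_inv (L : ℝ) (hL : 0 < L) (v : ℝ) (hv : 0 ≤ v) :
    ∫ w : ℝ, (Gr L w : ℂ) * Complex.exp (-(2 * π * w * Complex.I) * v) = (kk L v * Real.exp v : ℝ) := by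
  have hF : 𝓕 (FF L) = fun w => (Gr L w : ℂ) := funext (FF_fourier L hL)
  have hi : Integrable (𝓕 (FF L)) := by rw [hF]; exact (Gr_int L hL).ofReal
  have := (FF_cont L).fourierInv_fourier_eq (FF_int L hL) hi
  have h2 := congrFun this (-v)
  rw [hF, Real.fourierInv_eq'] at h2
  rw [FF, abs_neg, abs_of_nonneg hv] at h2
  rw [← h2]
  congr 1; ext w
  rw [smul_eq_mul, mul_comm]
  congr 2
  simp
  ring

def sw (τ w : ℝ) : ℂ := 3/2 + (τ + 2 * π * w) * Complex.I

lemma sw_re (τ w : ℝ) : (sw τ w).re = 3/2 := by simp [sw]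
lemma sw_cont (τ : ℝ) : Continuous (sw τ) := by unfold sw; fun_prop
lemma sw_cont2 (τ : ℝ) : Continuous (fun w => sw τ w) := sw_cont τ

lemma T_exp (L τ : ℝ) (hL : 0 < L) (v : ℝ) (hv : 0 ≤ v) :
    ∫ w : ℝ, (Gr L w : ℂ) * Complex.exp (-sw τ w * v) = (kk L v : ℂ) * Complex.exp (-(1/2 + τ * Complex.I) * v) := by
  have : ∀ w : ℝ, (Gr L w : ℂ) * Complex.exp (-sw τ w * v) =
      ((Gr L w : ℂ) * Complex.exp (-(2 * π * w * Complex.I) * v)) * Complex.exp (-(3/2 + τ * Complex.I) * v) := by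
    intro w
    rw [mul_assoc, ← Complex.exp_add]
    congr 2
    simp only [sw]; ring
  simp_rw [this]
  rw [integral_mul_const, Gr_inv L hL v hv]
  push_cast
  rw [mul_assoc, ← Complex.exp_add]
  congr 2
  ring

lemma T_one (L : ℝ) (hL : 0 < L) : ∫ w : ℝ, (Gr L w : ℂ) = 1 := by
  have := Gr_inv L hL 0 le_rfl
  simpa [kk] using this

lemma T_inv_fub (L τ : ℝ) (hL : 0 < L) (ρ : ℂ) (hρ : ρ.re < 3/2) :
    Integrable (fun p : ℝ × ℝ => (Gr L p.1 : ℂ) * Complex.exp (-(sw τ p.1 - ρ) * p.2))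
      (volume.prod (volume.restrict (Set.Ioi 0))) := by
  have hd : IntegrableOn (fun v : ℝ => Real.exp (-(3/2 - ρ.re) * v)) (Set.Ioi 0) :=
    exp_neg_integrableOn_Ioi 0 (by linarith)
  have := (Gr_int L hL).norm.mul_prod hd
  have hc := Gr_cont L hL
  have hs := sw_cont τ
  refine this.mono' (Continuous.aestronglyMeasurable (by fun_prop)) (Eventually.of_forall fun p => le_of_eq ?_)
  rw [norm_mul, Complex.norm_real, Complex.norm_exp]
  simp [sw_re]

lemma T_inv (L τ : ℝ) (hL : 0 < L) (ρ : ℂ) (hρ : ρ.re < 3/2) :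
    Integrable (fun w : ℝ => (Gr L w : ℂ) * (1 / (sw τ w - ρ))) ∧
    ∫ w : ℝ, (Gr L w : ℂ) * (1 / (sw τ w - ρ)) = jj L (ρ - 1/2 - τ * Complex.I) := by
  have hf := T_inv_fub L τ hL ρ hρ
  have e : ∀ w : ℝ, ∫ v in Set.Ioi (0:ℝ), (Gr L w : ℂ) * Complex.exp (-(sw τ w - ρ) * v) = (Gr L w : ℂ) * (1 / (sw τ w - ρ)) := by
    intro w
    rw [integral_const_mul, (exp_int_Ioi (sw τ w - ρ) (by rw [Complex.sub_re, sw_re]; linarith)).2]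
  constructor
  · have := hf.integral_prod_left
    exact this.congr (Eventually.of_forall e)
  · simp_rw [← e]
    rw [integral_integral_swap (f := fun (w : ℝ) (v : ℝ) => (Gr L w : ℂ) * Complex.exp (-(sw τ w - ρ) * v)) hf, jj]
    refine setIntegral_congr_fun measurableSet_Ioi fun v hv => ?_
    have hv0 : (0:ℝ) < v := hv
    have e2 : ∀ w : ℝ, (Gr L w : ℂ) * Complex.exp (-(sw τ w - ρ) * v) = ((Gr L w : ℂ) * Complex.exp (-sw τ w * v)) * Complex.exp (ρ * v) := by
      intro w
      rw [mul_assoc, ← Complex.exp_add]; congr 2; ring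
    simp_rw [e2]
    rw [integral_mul_const, T_exp L τ hL v hv0.le, mul_assoc, ← Complex.exp_add]
    congr 2; ring

lemma T_psi_fub (L τ : ℝ) (hL : 0 < L) (hτ : 0 ≤ τ) :
    Integrable (fun p : ℝ × ℝ => (Gr L p.1 : ℂ) * ((gk p.2 : ℂ) * (Complex.exp (-2 * p.2) - Complex.exp (-sw τ p.1 * p.2))))
      (volume.prod (volume.restrict (Set.Ioi 0))) := by
  set A := 2 * √(2 * (8 + τ)) with hA
  have h1 := ((Gr_half_int L hL).const_mul A).mul_prod half_int
  have hc := Gr_cont L hL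
  have hs := sw_cont τ
  refine h1.mono' ?_ ?_
  · refine AEStronglyMeasurable.mul (Continuous.aestronglyMeasurable (by fun_prop)) ?_
    refine AEStronglyMeasurable.mul ?_ (Continuous.aestronglyMeasurable (by fun_prop))
    have hg : AEStronglyMeasurable (fun v : ℝ => (gk v : ℂ)) (volume.restrict (Set.Ioi 0)) :=
      (Complex.continuous_ofReal.comp_continuousOn gk_cont).aestronglyMeasurable measurableSet_Ioi
    exact hg.comp_snd
  · have hae : ∀ᵐ p ∂(volume.prod (volume.restrict (Set.Ioi (0:ℝ))) : Measure (ℝ × ℝ)), 0 < p.2 := by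
      have h0 : ∀ᵐ v ∂(volume.restrict (Set.Ioi (0:ℝ))), 0 < v := ae_restrict_mem measurableSet_Ioi
      exact Measure.quasiMeasurePreserving_snd.ae h0
    filter_upwards [hae] with p hp
    rw [norm_mul, Complex.norm_real, Real.norm_eq_abs]
    have hb := gk_bound (sw τ p.1) (by rw [sw_re]) p.2 hp
    have hn : ‖sw τ p.1 - 2‖ ≤ (8 + τ) * (1 + ‖p.1‖) := by
      have e : sw τ p.1 - 2 = ((-1/2 : ℝ) : ℂ) + ((τ + 2 * π * p.1 : ℝ) : ℂ) * Complex.I := by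
        simp only [sw]; push_cast; ring
      rw [e]
      refine (norm_add_le _ _).trans ?_
      rw [norm_mul, Complex.norm_I, mul_one, Complex.norm_real, Complex.norm_real]
      have h2 : ‖τ + 2 * π * p.1‖ ≤ τ + 2 * π * ‖p.1‖ := by
        refine (norm_add_le _ _).trans ?_
        rw [Real.norm_of_nonneg hτ, norm_mul, Real.norm_of_nonneg (show 0 ≤ 2 * π by positivity)]
      have h3 : ‖(-1/2:ℝ)‖ = 1/2 := by norm_num
      rw [h3]
      have h4 := Real.pi_lt_four
      nlinarith [norm_nonneg p.1]
    have hq : √(2 * ‖sw τ p.1 - 2‖) ≤ √(2 * (8 + τ)) * √(1 + ‖p.1‖) := by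
      rw [← Real.sqrt_mul (by positivity)]
      apply Real.sqrt_le_sqrt
      linarith
    have hw : 0 ≤ p.2^(-1/2:ℝ) * Real.exp (-(1/2) * p.2) := by positivity
    calc |Gr L p.1| * _ ≤ |Gr L p.1| * (2 * √(2 * ‖sw τ p.1 - 2‖) * (p.2^(-1/2:ℝ) * Real.exp (-(1/2) * p.2))) :=
          mul_le_mul_of_nonneg_left hb (abs_nonneg _)
      _ ≤ |Gr L p.1| * (2 * (√(2 * (8 + τ)) * √(1 + ‖p.1‖)) * (p.2^(-1/2:ℝ) * Real.exp (-(1/2) * p.2))) := by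
          gcongr
      _ = _ := by rw [hA]; ring

lemma T_psi (L τ : ℝ) (hL : 0 < L) (hτ : 0 ≤ τ) :
    Integrable (fun w : ℝ => (Gr L w : ℂ) * Complex.digamma (sw τ w / 2)) ∧
    (∫ w : ℝ, (Gr L w : ℂ) * Complex.digamma (sw τ w / 2)).re =
      - Real.eulerMascheroniConstant + ∫ v in Set.Ioi (0:ℝ), gk v * (Real.exp (-2 * v) -
        kk L v * Real.exp (-(1/2) * v) * Real.cos (τ * v)) := by
  have hf := T_psi_fub L τ hL hτ
  have e : ∀ w : ℝ, (Gr L w : ℂ) * Complex.digamma (sw τ w / 2) = (Gr L w : ℂ) * (-Real.eulerMascheroniConstant : ℂ) +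
      ∫ v in Set.Ioi (0:ℝ), (Gr L w : ℂ) * ((gk v : ℂ) * (Complex.exp (-2 * v) - Complex.exp (-sw τ w * v))) := by
    intro w
    rw [gauss_digamma (sw τ w) (by rw [sw_re]), integral_const_mul]; ring
  have i1 : Integrable (fun w : ℝ => (Gr L w : ℂ) * (-Real.eulerMascheroniConstant : ℂ)) := (Gr_int L hL).ofReal.mul_const _
  have i2 : Integrable (fun w : ℝ => ∫ v in Set.Ioi (0:ℝ), (Gr L w : ℂ) * ((gk v : ℂ) * (Complex.exp (-2 * v) - Complex.exp (-sw τ w * v)))) :=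
    hf.integral_prod_left
  have i3 := hf.integral_prod_right
  have e3 : ∀ v ∈ Set.Ioi (0:ℝ), ∫ w : ℝ, (Gr L w : ℂ) * ((gk v : ℂ) * (Complex.exp (-2 * v) - Complex.exp (-sw τ w * v))) =
      (gk v : ℂ) * (Complex.exp (-2 * v) - (kk L v : ℂ) * Complex.exp (-(1/2 + τ * Complex.I) * v)) := by
    intro v hv
    have hv0 : (0:ℝ) < v := hv
    have e4 : ∀ w : ℝ, (Gr L w : ℂ) * ((gk v : ℂ) * (Complex.exp (-2 * v) - Complex.exp (-sw τ w * v))) =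
      (gk v : ℂ) * ((Gr L w : ℂ) * Complex.exp (-2 * v) - (Gr L w : ℂ) * Complex.exp (-sw τ w * v)) := by
      intro w; ring
    simp_rw [e4]
    have j2 : Integrable (fun w : ℝ => (Gr L w : ℂ) * Complex.exp (-sw τ w * v)) := by
      have hs := sw_cont τ
      refine Integrable.mul_bdd (c := 1) (Gr_int L hL).ofReal (Continuous.aestronglyMeasurable (by fun_prop)) (Eventually.of_forall fun w => ?_)
      rw [Complex.norm_exp]
      apply Real.exp_le_one_iff.mpr
      simp [sw_re]; linarith
    have j1 : Integrable (fun w : ℝ => (Gr L w : ℂ) * Complex.exp (-2 * v)) := (Gr_int L hL).ofReal.mul_const _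
    rw [integral_const_mul, integral_sub j1 j2, integral_mul_const,
      T_exp L τ hL v hv0.le, T_one L hL, one_mul]
  simp_rw [e]
  refine ⟨i1.add i2, ?_⟩
  rw [integral_add i1 i2, integral_mul_const, T_one L hL, one_mul,
    integral_integral_swap (f := fun w v => (Gr L w : ℂ) * ((gk v : ℂ) * (Complex.exp (-2 * v) - Complex.exp (-sw τ w * v)))) hf,
    Complex.add_re]
  congr 1
  · have i3' : IntegrableOn (fun v : ℝ => ∫ w : ℝ, (Gr L w : ℂ) * ((gk v : ℂ) * (Complex.exp (-2 * v) - Complex.exp (-sw τ w * v)))) (Set.Ioi 0) := i3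
    have := integral_re i3'
    simp only [RCLike.re_to_complex] at this
    rw [← this]
    refine setIntegral_congr_fun measurableSet_Ioi fun v hv => ?_
    rw [e3 v hv, Complex.re_ofReal_mul, Complex.sub_re, Complex.re_ofReal_mul, Complex.exp_re, Complex.exp_re]
    simp [Real.cos_neg]
    left
    ring

lemma lser_eq (s : ℂ) : LSeries (fun n => (ArithmeticFunction.vonMangoldt n : ℂ)) s =
    ∑' n : ℕ, (ArithmeticFunction.vonMangoldt n : ℂ) * Complex.exp (-s * (Real.log n : ℝ)) := by
  rw [LSeries]
  congr 1; ext n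
  rcases eq_or_ne n 0 with rfl | hn
  · simp
  · rw [LSeries.term_of_ne_zero hn, div_eq_mul_inv, ← Complex.cpow_neg, Complex.cpow_def_of_ne_zero (by exact_mod_cast hn),
      Complex.natCast_log]
    congr 2; ring

lemma lser_summable : Summable (fun n : ℕ => ArithmeticFunction.vonMangoldt n * Real.exp (-(3/2) * Real.log n)) := by
  have h := ArithmeticFunction.LSeriesSummable_vonMangoldt (s := 3/2) (by norm_num)
  have := h.norm
  refine this.congr fun n => ?_
  rcases eq_or_ne n 0 with rfl | hn
  · simp
  · have h0 : (0:ℝ) < n := by exact_mod_cast Nat.pos_of_ne_zero hn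
    rw [LSeries.norm_term_eq, if_neg hn, Complex.norm_real, Real.norm_of_nonneg ArithmeticFunction.vonMangoldt_nonneg,
      div_eq_mul_inv, ← Real.rpow_neg h0.le, Real.rpow_def_of_pos h0]
    congr 2
    norm_num
    ring

lemma T_lser (L τ : ℝ) (hL : 0 < L) :
    Integrable (fun w : ℝ => (Gr L w : ℂ) * LSeries (fun n => (ArithmeticFunction.vonMangoldt n : ℂ)) (sw τ w)) ∧
    HasSum (fun n : ℕ => (ArithmeticFunction.vonMangoldt n : ℂ) * ((kk L (Real.log n) : ℂ) * Complex.exp (-(1/2 + τ * Complex.I) * (Real.log n : ℝ))))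
    (∫ w : ℝ, (Gr L w : ℂ) * LSeries (fun n => (ArithmeticFunction.vonMangoldt n : ℂ)) (sw τ w)) := by
  have hs := sw_cont τ
  have hG := Gr_cont L hL
  have hterm : ∀ (n : ℕ) (w : ℝ), ‖(ArithmeticFunction.vonMangoldt n : ℂ) * Complex.exp (-sw τ w * (Real.log n : ℝ))‖ =
      ArithmeticFunction.vonMangoldt n * Real.exp (-(3/2) * Real.log n) := by
    intro n w
    rw [norm_mul, Complex.norm_real, Real.norm_of_nonneg ArithmeticFunction.vonMangoldt_nonneg, Complex.norm_exp,
      Complex.re_mul_ofReal, Complex.neg_re, sw_re]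
  have hcont : Continuous (fun w => LSeries (fun n => (ArithmeticFunction.vonMangoldt n : ℂ)) (sw τ w)) := by
    simp_rw [lser_eq]
    refine continuous_tsum (fun n => by fun_prop) lser_summable fun n w => (hterm n w).le
  constructor
  · refine Integrable.mul_bdd (c := ∑' n : ℕ, ArithmeticFunction.vonMangoldt n * Real.exp (-(3/2) * Real.log n)) (Gr_int L hL).ofReal
      hcont.aestronglyMeasurable (Eventually.of_forall fun w => ?_)
    rw [lser_eq]
    exact tsum_of_norm_bounded lser_summable.hasSum fun n => (hterm n w).le
  · have hi : ∀ n : ℕ, Integrable (fun w : ℝ => (Gr L w : ℂ) * ((ArithmeticFunction.vonMangoldt n : ℂ) * Complex.exp (-sw τ w * (Real.log n : ℝ)))) := by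
      intro n
      exact Integrable.mul_bdd (c := ArithmeticFunction.vonMangoldt n * Real.exp (-(3/2) * Real.log n)) (Gr_int L hL).ofReal
        (Continuous.aestronglyMeasurable (by fun_prop)) (Eventually.of_forall fun w => (hterm n w).le)
    have hsum : Summable (fun n : ℕ => ∫ w : ℝ, ‖(Gr L w : ℂ) * ((ArithmeticFunction.vonMangoldt n : ℂ) * Complex.exp (-sw τ w * (Real.log n : ℝ)))‖) := by
      have := lser_summable.mul_left (∫ w : ℝ, ‖(Gr L w : ℂ)‖)
      refine this.congr fun n => ?_
      simp_rw [norm_mul _ (_ * _), hterm]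
      rw [integral_mul_const]
    have := hasSum_integral_of_summable_integral_norm hi hsum
    simp_rw [tsum_mul_left, ← lser_eq] at this
    refine this.congr_fun ?_
    intro n
    rw [← T_exp L τ hL (Real.log n) (Real.log_natCast_nonneg n), ← integral_const_mul]
    congr 1; ext w; ring

lemma jj_bound (L τ : ℝ) (hL : 0 < L) (hτ : 0 < τ) (c : ℂ) (hre : c.re ≤ 1/2) (him : c.im = -τ) :
    |(jj L c).re| ≤ 2 * Real.exp (L / 2) / (τ^2 * L) + 1 / τ := by
  have hc : c ≠ 0 := by
    intro h; rw [h] at him; simp at him; linarith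
  have hLc : (L:ℂ) ≠ 0 := by exact_mod_cast hL.ne'
  have hn : τ ≤ ‖c‖ := by
    have := Complex.abs_im_le_norm c
    rw [him, abs_neg, abs_of_pos hτ] at this; exact this
  rw [jj_eq L hL c hc]
  refine (Complex.abs_re_le_norm _).trans ?_
  have e : jf L c = (Complex.exp (c * L) - 1) / (c^2 * L) - 1 / c := by
    unfold jf; field_simp
  rw [e]
  refine (norm_sub_le _ _).trans (add_le_add ?_ ?_)
  · rw [norm_div, norm_mul, norm_pow, Complex.norm_real, Real.norm_of_nonneg hL.le]
    have h1 : ‖Complex.exp (c * L) - 1‖ ≤ 2 * Real.exp (L/2) := by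
      refine (norm_sub_le _ _).trans ?_
      rw [Complex.norm_exp, norm_one, Complex.re_mul_ofReal]
      have h2 : Real.exp (c.re * L) ≤ Real.exp (L/2) := Real.exp_le_exp.mpr (by nlinarith)
      have h3 : 1 ≤ Real.exp (L/2) := Real.one_le_exp (by positivity)
      linarith
    gcongr
  · rw [norm_div, norm_one]
    exact one_div_le_one_div_of_le hτ hn

lemma T_xi (L τ : ℝ) (hL : 0 < L) (hτ : 0 ≤ τ) :
    Integrable (fun w : ℝ => (Gr L w : ℂ) * logDeriv xiF (sw τ w)) ∧
    (∫ w : ℝ, (Gr L w : ℂ) * logDeriv xiF (sw τ w)).re =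
      (jj L (0 - 1/2 - τ * Complex.I)).re + (jj L (1 - 1/2 - τ * Complex.I)).re - Real.log π / 2 +
      (∫ w : ℝ, (Gr L w : ℂ) * Complex.digamma (sw τ w / 2)).re / 2 -
      (∫ w : ℝ, (Gr L w : ℂ) * LSeries (fun n => (ArithmeticFunction.vonMangoldt n : ℂ)) (sw τ w)).re := by
  obtain ⟨i1, e1⟩ := T_inv L τ hL 0 (by norm_num)
  obtain ⟨i2, e2⟩ := T_inv L τ hL 1 (by norm_num)
  obtain ⟨i4, -⟩ := T_psi L τ hL hτ
  obtain ⟨i5, -⟩ := T_lser L τ hL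
  have i3 : Integrable (fun w : ℝ => (Gr L w : ℂ) * (Real.log π / 2 : ℂ)) := (Gr_int L hL).ofReal.mul_const _
  have h : ∀ w : ℝ, (Gr L w : ℂ) * logDeriv xiF (sw τ w) =
      (Gr L w : ℂ) * (1 / (sw τ w - 0)) + (Gr L w : ℂ) * (1 / (sw τ w - 1)) - (Gr L w : ℂ) * (Real.log π / 2 : ℂ)
       + (1/2 : ℂ) * ((Gr L w : ℂ) * Complex.digamma (sw τ w / 2)) -
       (Gr L w : ℂ) * LSeries (fun n => (ArithmeticFunction.vonMangoldt n : ℂ)) (sw τ w) := by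
    intro w
    rw [xi_logDeriv_eq _ (by rw [sw_re]; norm_num), sub_zero]
    ring
  simp_rw [h]
  have j1 : Integrable (fun w : ℝ => (Gr L w : ℂ) * (1 / (sw τ w - 0)) + (Gr L w : ℂ) * (1 / (sw τ w - 1))) := i1.add i2
  have j2 : Integrable (fun w : ℝ => (Gr L w : ℂ) * (1 / (sw τ w - 0)) + (Gr L w : ℂ) * (1 / (sw τ w - 1)) -
    (Gr L w : ℂ) * (Real.log π / 2 : ℂ)) := j1.sub i3
  have i4' := i4.const_mul (1/2 : ℂ)
  have j3 : Integrable (fun w : ℝ => (Gr L w : ℂ) * (1 / (sw τ w - 0)) + (Gr L w : ℂ) * (1 / (sw τ w - 1)) -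
    (Gr L w : ℂ) * (Real.log π / 2 : ℂ) + (1/2 : ℂ) * ((Gr L w : ℂ) * Complex.digamma (sw τ w / 2))) := j2.add i4'
  refine ⟨j3.sub i5, ?_⟩
  rw [integral_sub j3 i5, integral_add j2 i4', integral_sub j1 i3, integral_add i1 i2, e1, e2, integral_mul_const,
    integral_const_mul, T_one L hL, one_mul]
  rw [Complex.sub_re, Complex.add_re, Complex.sub_re, Complex.add_re]
  have a1 : ((Real.log π / 2 : ℂ)).re = Real.log π / 2 := by
    rw [show (Real.log π / 2 : ℂ) = ((Real.log π / 2 : ℝ) : ℂ) by push_cast; rfl, Complex.ofReal_re]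
  have a2 : ∀ z : ℂ, ((1/2 : ℂ) * z).re = z.re / 2 := by
    intro z
    rw [show (1/2:ℂ) = ((1/2:ℝ):ℂ) by push_cast; rfl, Complex.re_ofReal_mul]; ring
  rw [a1, a2]

lemma zero_sum (hRH : RiemannHypothesis) (L τ : ℝ) (hL : 0 < L) (hτ : 0 ≤ τ) :
    HasSum (fun γ : allOrds => (ordMult (γ:ℝ) : ℝ) * (L / 2 * sincSq ((γ - τ) * L / 2)))
      (∫ w : ℝ, (Gr L w : ℂ) * logDeriv xiF (sw τ w)).re := by
  have hxi := (T_xi L τ hL hτ).1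
  have hcount : Countable allOrds := allOrds_countable.to_subtype
  have hre : ∀ (g : ℝ) (z : ℂ), ((g:ℂ) * z).re = g * z.re := fun g z => Complex.re_ofReal_mul g z
  have hρ : ∀ γ : ℝ, ((1/2 : ℂ) + γ * Complex.I).re < 3/2 := by intro γ; simp; norm_num
  have hsw : ∀ w, (1/2:ℝ) < (sw τ w).re := by intro w; rw [sw_re]; norm_num
  have hiz : ∀ γ : allOrds, Integrable (fun w : ℝ => Gr L w * (zterm (sw τ w) γ).re) := by
    intro γ
    refine (T_inv L τ hL _ (hρ γ)).1.re.congr (Eventually.of_forall fun w => ?_)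
    exact hre _ _
  have hi : ∀ γ : allOrds, Integrable (fun w : ℝ => Gr L w * ((ordMult (γ:ℝ) : ℝ) * (zterm (sw τ w) γ).re)) := by
    intro γ
    refine ((hiz γ).const_mul (ordMult (γ:ℝ) : ℝ)).congr (Eventually.of_forall fun w => ?_)
    simp only; ring
  have hxr : Integrable (fun w : ℝ => Gr L w * (logDeriv xiF (sw τ w)).re) :=
    hxi.re.congr (Eventually.of_forall fun w => hre _ _)
  have hpos : ∀ (γ : allOrds) w, 0 ≤ (ordMult (γ:ℝ) : ℝ) * (zterm (sw τ w) γ).re := fun γ w =>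
    mul_nonneg (Nat.cast_nonneg _) (zterm_re_nonneg _ (hsw w) _)
  have hs : ∀ w, HasSum (fun γ : allOrds => (ordMult (γ:ℝ) : ℝ) * (zterm (sw τ w) γ).re) (logDeriv xiF (sw τ w)).re :=
    fun w => xi_hasSum hRH _ (hsw w)
  have hsum : Summable (fun γ : allOrds => ∫ w : ℝ, ‖Gr L w * ((ordMult (γ:ℝ) : ℝ) * (zterm (sw τ w) γ).re)‖) := by
    refine summable_of_sum_le (c := ∫ w : ℝ, ‖Gr L w * (logDeriv xiF (sw τ w)).re‖) (fun γ => integral_nonneg fun w => norm_nonneg _) ?_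
    intro u
    rw [← integral_finsetSum u (fun γ _ => (hi γ).norm)]
    refine integral_mono (integrable_finsetSum u (fun γ _ => (hi γ).norm)) hxr.norm fun w => ?_
    simp only [norm_mul (Gr L w)]
    rw [← Finset.mul_sum]
    refine mul_le_mul_of_nonneg_left ?_ (norm_nonneg _)
    refine le_trans (le_of_eq (Finset.sum_congr rfl fun γ _ => Real.norm_of_nonneg (hpos γ w))) ?_
    refine (sum_le_hasSum u (fun γ _ => hpos γ w) (hs w)).trans (le_abs_self _)
  have main := hasSum_integral_of_summable_integral_norm hi hsum
  have e1 : (∫ w : ℝ, (Gr L w : ℂ) * logDeriv xiF (sw τ w)).re =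
      ∫ w : ℝ, (∑' γ : allOrds, Gr L w * ((ordMult (γ:ℝ) : ℝ) * (zterm (sw τ w) γ).re)) := by
    have := integral_re hxi
    simp only [RCLike.re_to_complex] at this
    rw [← this]
    congr 1; ext w
    rw [tsum_mul_left, (hs w).tsum_eq, hre]
  rw [e1]
  refine main.congr_fun fun γ => ?_
  have e2 : ∀ w : ℝ, Gr L w * ((ordMult (γ:ℝ) : ℝ) * (zterm (sw τ w) γ).re) = (ordMult (γ:ℝ) : ℝ) * (Gr L w * (zterm (sw τ w) γ).re) := by
    intro w; ring
  simp_rw [e2]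
  rw [integral_const_mul]
  congr 1
  obtain ⟨h1, h2⟩ := T_inv L τ hL _ (hρ γ)
  have h3 := integral_re h1
  simp only [RCLike.re_to_complex] at h3
  rw [h2, show (1/2 : ℂ) + (γ:ℝ) * Complex.I - 1/2 - τ * Complex.I = (((γ:ℝ) - τ : ℝ) : ℂ) * Complex.I by push_cast; ring,
    jj_imag L hL] at h3
  rw [← h3]
  congr 1; ext w
  exact hre _ _

lemma prime_sum (x τ : ℝ) (hx : 2 ≤ x) :
    (∫ w : ℝ, (Gr (Real.log x) w : ℂ) * LSeries (fun n => (ArithmeticFunction.vonMangoldt n : ℂ)) (sw τ w)).re =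
    ∑ n ∈ Finset.Icc 1 ⌊x⌋₊, ArithmeticFunction.vonMangoldt n / Real.sqrt n * (1 - Real.log n / Real.log x) * Real.cos (τ * Real.log n) := by
  have hL : 0 < Real.log x := Real.log_pos (by linarith)
  have h := Complex.hasSum_re (T_lser (Real.log x) τ hL).2
  have h2 := hasSum_sum_of_ne_finset_zero (L := SummationFilter.unconditional ℕ) (f := fun n : ℕ => ((ArithmeticFunction.vonMangoldt n : ℂ) * ((kk (Real.log x) (Real.log n) : ℂ) *
      Complex.exp (-(1/2 + τ * Complex.I) * (Real.log n : ℝ)))).re) (s := Finset.Icc 1 ⌊x⌋₊) (by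
    intro n hn
    rcases eq_or_ne n 0 with rfl | hn0
    · simp
    · have : ⌊x⌋₊ < n := by
        by_contra hc
        exact hn (Finset.mem_Icc.mpr ⟨Nat.one_le_iff_ne_zero.mpr hn0, not_lt.mp hc⟩)
      have hxn : x < n := Nat.lt_of_floor_lt this
      rw [kk_eq_zero _ _ hL (Real.log_le_log (by linarith) hxn.le)]
      simp)
  rw [h.unique h2]
  refine Finset.sum_congr rfl fun n hn => ?_
  obtain ⟨hn1, hn2⟩ := Finset.mem_Icc.mp hn
  have hn0 : (0:ℝ) < n := by exact_mod_cast hn1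
  have hnx : (n:ℝ) ≤ x := (Nat.le_floor_iff (by linarith)).mp hn2
  rw [kk_eq_of_le _ _ hL (Real.log_le_log hn0 hnx), Complex.re_ofReal_mul, Complex.re_ofReal_mul, Complex.exp_re]
  have e1 : (-(1/2 + τ * Complex.I) * (Real.log n : ℝ)).re = -(1/2) * Real.log n := by
    rw [Complex.re_mul_ofReal]; simp
  have e2 : (-(1/2 + τ * Complex.I) * (Real.log n : ℝ)).im = -(τ * Real.log n) := by
    rw [Complex.im_mul_ofReal]; simp
  rw [e1, e2, Real.cos_neg]
  have e3 : Real.exp (-(1/2) * Real.log n) = 1 / √n := by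
    rw [Real.sqrt_eq_rpow, one_div (_ ^ _), ← Real.rpow_neg hn0.le, Real.rpow_def_of_pos hn0]
    congr 1; ring
  rw [e3]; ring

open scoped ArithmeticFunction in
/-- **Lemma 1 (explicit formula).** Assume RH. Then for all `τ ≥ 2` and `x ≥ 2`,
`Σ_γ (sin(½(γ-τ) log x) / (½(γ-τ) log x))² = log(τ/2π)/log x
  - (2/log x) Σ_{n≤x} Λ(n) n^{-1/2} (1 - log n/log x) cos(τ log n)
  + O(1/(τ log x)) + O(x^{1/2}/(τ log x)²)`,
the sum on the left being over all ordinates `γ ∈ ℝ` of nontrivial zeros, counted with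
multiplicity, with absolute implied constants. -/
theorem explicit_formula (hRH : RiemannHypothesis) :
    ∃ C : ℝ, 0 < C ∧ ∀ τ : ℝ, 2 ≤ τ → ∀ x : ℝ, 2 ≤ x →
      |(∑' γ : allOrds, (ordMult (γ : ℝ) : ℝ) * sincSq ((γ - τ) * Real.log x / 2)) -
        (Real.log (τ / (2 * π)) / Real.log x -
          2 / Real.log x * ∑ n ∈ Finset.Icc 1 ⌊x⌋₊,
            Λ n / Real.sqrt n * (1 - Real.log n / Real.log x) * Real.cos (τ * Real.log n))|
        ≤ C * (1 / (τ * Real.log x)) + C * (Real.sqrt x / (τ * Real.log x) ^ 2) := by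
  refine ⟨34, by norm_num, fun τ hτ x hx => ?_⟩
  have hτ0 : 0 < τ := by linarith
  have hx0 : 0 < x := by linarith
  rw [← prime_sum x τ hx]
  have hL12 : 1/2 ≤ Real.log x := by
    have := Real.log_two_gt_d9
    have h2 := Real.log_le_log (by norm_num) hx
    linarith
  have hsq : Real.exp (Real.log x / 2) = √x := by
    rw [Real.sqrt_eq_rpow, Real.rpow_def_of_pos hx0]; congr 1; ring
  set L := Real.log x with hLdef
  have hL : 0 < L := by linarith
  have hz := zero_sum hRH L τ hL hτ0.le
  have hzt := hz.tsum_eq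
  have e0 : ∀ γ : allOrds, (ordMult (γ:ℝ) : ℝ) * (L / 2 * sincSq ((γ - τ) * L / 2)) =
      L / 2 * ((ordMult (γ:ℝ) : ℝ) * sincSq ((γ - τ) * L / 2)) := by intro γ; ring
  simp_rw [e0] at hzt
  rw [tsum_mul_left, (T_xi L τ hL hτ0.le).2, (T_psi L τ hL hτ0.le).2] at hzt
  have hpsi := psi_est L τ hL12 (by linarith)
  have b1 := jj_bound L τ hL hτ0 (0 - 1/2 - τ * Complex.I) (by norm_num) (by simp)
  have b2 := jj_bound L τ hL hτ0 (1 - 1/2 - τ * Complex.I) (by norm_num) (by simp)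
  rw [hsq] at b1 b2
  set S := ∑' γ : allOrds, (ordMult (γ : ℝ) : ℝ) * sincSq ((γ - τ) * L / 2)
  set D := (∫ w : ℝ, (Gr L w : ℂ) * LSeries (fun n => (ArithmeticFunction.vonMangoldt n : ℂ)) (sw τ w)).re
  set P := - Real.eulerMascheroniConstant + ∫ v in Set.Ioi (0:ℝ), gk v * (Real.exp (-2 * v) -
      kk L v * Real.exp (-(1/2) * v) * Real.cos (τ * v))
  set A := (jj L (0 - 1/2 - τ * Complex.I)).re
  set B := (jj L (1 - 1/2 - τ * Complex.I)).re
  have hlog : Real.log (τ / (2 * π)) = Real.log (τ / 2) - Real.log π := by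
    rw [← div_div, Real.log_div (by positivity) Real.pi_pos.ne']
  have hS : S = 2 / L * (A + B - Real.log π / 2 + P / 2 - D) := by
    rw [← hzt]; field_simp
  have key : S - (Real.log (τ / (2 * π)) / L - 2 / L * D) = 2 / L * (A + B + (P - Real.log (τ / 2)) / 2) := by
    rw [hS, hlog]; ring
  rw [key, abs_mul, abs_of_pos (show 0 < 2 / L by positivity)]
  have hbd : |A + B + (P - Real.log (τ / 2)) / 2| ≤ 2 * (2 * √x / (τ^2 * L) + 1 / τ) + 30 / τ / 2 := by
    rw [abs_le] at *
    constructor <;> linarith [b1.1, b1.2, b2.1, b2.2, hpsi.1, hpsi.2]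
  calc 2 / L * |A + B + (P - Real.log (τ / 2)) / 2| ≤ 2 / L * (2 * (2 * √x / (τ^2 * L) + 1 / τ) + 30 / τ / 2) :=
        mul_le_mul_of_nonneg_left hbd (by positivity)
    _ = 34 * (1 / (τ * L)) + 8 * (√x / (τ * L)^2) := by field_simp; ring
    _ ≤ 34 * (1 / (τ * L)) + 34 * (√x / (τ * L)^2) := by
        have : 0 ≤ √x / (τ * L)^2 := by positivity
        linarith
end
end

section
/- There is a positive absolute constant C with the following property (unconditionally): for every integer k ≥ 1 and all reals x ≥ 2 and T ≥ 2 with x^k ≤ T, ∫_0^T | Σ_{p≤x, p prime} (log p) · p^{−1/2−it} · (1 − (log p)/(log x)) |^{2k} dt ≤ C^k · k! · T · ( Σ_{p≤x, p prime} (log p)²/p · (1 − (log p)/(log x))² )^k ≤ C^k · k! · T · (log x)^{2k}. -/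
open Filter MeasureTheory
open scoped Real

noncomputable section



lemma aux_sum_log_div (n : ℕ) (hn : 1 ≤ n) :
    ∑ p ∈ Nat.primesBelow (n + 1), Real.log p / p ≤ 2 * Real.log n := by
  have hnpos : (0:ℝ) < n := by exact_mod_cast hn
  -- log n! ≥ sum (n/p) log p
  have h1 : ∑ p ∈ Nat.primesBelow (n + 1), ((n / p : ℕ) : ℝ) * Real.log p ≤ n * Real.log n := by
    have e1 : ∀ p ∈ Nat.primesBelow (n + 1), ((n / p : ℕ) : ℝ) * Real.log p
        = ∑ m ∈ Finset.Ioc 0 n, if p ∣ m then Real.log p else 0 := by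
      intro p _
      rw [← Finset.sum_filter, Finset.sum_const, Nat.Ioc_filter_dvd_card_eq_div, nsmul_eq_mul]
    rw [Finset.sum_congr rfl e1, Finset.sum_comm]
    have e2 : ∀ m ∈ Finset.Ioc 0 n,
        (∑ p ∈ Nat.primesBelow (n + 1), if p ∣ m then Real.log p else 0) ≤ Real.log n := by
      intro m hm
      rw [Finset.mem_Ioc] at hm
      rw [← Finset.sum_filter]
      have hsub : (Nat.primesBelow (n + 1)).filter (· ∣ m) ⊆ m.primeFactors := by
        intro p hp
        rw [Finset.mem_filter, Nat.mem_primesBelow] at hp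
        exact Nat.mem_primeFactors.2 ⟨hp.1.2, hp.2, by omega⟩
      calc _ ≤ ∑ p ∈ m.primeFactors, Real.log p :=
            Finset.sum_le_sum_of_subset_of_nonneg hsub (fun i _ _ => Real.log_natCast_nonneg i)
        _ = Real.log (∏ p ∈ m.primeFactors, (p : ℝ)) := by
            rw [Real.log_prod]
            intro p hp
            exact_mod_cast (Nat.prime_of_mem_primeFactors hp).ne_zero
        _ ≤ Real.log n := by
            have : (∏ p ∈ m.primeFactors, p) ≤ n :=
              (Nat.le_of_dvd hm.1 (Nat.prod_primeFactors_dvd m)).trans hm.2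
            apply Real.log_le_log
            · exact Finset.prod_pos fun p hp => by
                exact_mod_cast (Nat.prime_of_mem_primeFactors hp).pos
            · rw [← Nat.cast_prod]; exact_mod_cast this
    calc _ ≤ ∑ m ∈ Finset.Ioc 0 n, Real.log n := Finset.sum_le_sum e2
      _ = n * Real.log n := by simp
  have h2 : ∑ p ∈ Nat.primesBelow (n + 1), (n:ℝ) / 2 * (Real.log p / p) ≤
      ∑ p ∈ Nat.primesBelow (n + 1), ((n / p : ℕ) : ℝ) * Real.log p := by
    apply Finset.sum_le_sum
    intro p hp
    rw [Nat.mem_primesBelow] at hp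
    have hp0 : 0 < p := hp.2.pos
    have hpp : (0:ℝ) < p := by exact_mod_cast hp0
    have hd : n < 2 * ((n / p) * p) := by
      have a1 : 1 ≤ n / p := (Nat.one_le_div_iff hp0).2 (by omega)
      have a2 := Nat.lt_div_mul_add (a := n) hp0
      nlinarith
    have hd' : (n:ℝ) ≤ 2 * (((n / p : ℕ):ℝ) * p) := by exact_mod_cast hd.le
    have : (n:ℝ) / 2 * (Real.log p / p) = ((n:ℝ) / (2 * p)) * Real.log p := by field_simp
    rw [this]
    apply mul_le_mul_of_nonneg_right _ (Real.log_natCast_nonneg p)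
    rw [div_le_iff₀ (by positivity)]
    linarith
  rw [← Finset.mul_sum] at h2
  have h3 := h2.trans h1
  have : (n:ℝ) / 2 * (∑ p ∈ Nat.primesBelow (n + 1), Real.log p / p) ≤ n / 2 * (2 * Real.log n) := by
    linarith
  exact le_of_mul_le_mul_left this (by positivity)

lemma aux_second (x : ℝ) (hx : 2 ≤ x) :
    (∑ p ∈ Nat.primesBelow (⌊x⌋₊ + 1),
            (Real.log p) ^ 2 / p * (1 - Real.log p / Real.log x) ^ 2) ≤ Real.log x ^ 2 := by
  have hL : 0 < Real.log x := Real.log_pos (by linarith)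
  set L := Real.log x with hLdef
  have hfl : 1 ≤ ⌊x⌋₊ := Nat.le_floor (by norm_num; linarith)
  have h1 := aux_sum_log_div ⌊x⌋₊ hfl
  have h2 : Real.log (⌊x⌋₊ : ℝ) ≤ L := by
    apply Real.log_le_log (by exact_mod_cast hfl) (Nat.floor_le (by linarith))
  have h3 : ∀ p ∈ Nat.primesBelow (⌊x⌋₊ + 1),
      (Real.log p) ^ 2 / p * (1 - Real.log p / L) ^ 2 ≤ L / 4 * (Real.log p / p) := by
    intro p hp
    rw [Nat.mem_primesBelow] at hp
    have hpp : (0:ℝ) < p := by exact_mod_cast hp.2.pos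
    have hpx : Real.log p ≤ L := by
      apply Real.log_le_log hpp
      exact (Nat.cast_le.2 (Nat.lt_succ_iff.1 hp.1)).trans (Nat.floor_le (by linarith))
    have hp0 : 0 ≤ Real.log p := Real.log_natCast_nonneg p
    obtain ⟨u, hu⟩ : ∃ u, u = Real.log p / L := ⟨_, rfl⟩
    have hlu : Real.log p = u * L := by rw [hu]; field_simp
    have hu0 : 0 ≤ u := by rw [hu]; positivity
    have hu1 : u ≤ 1 := by rw [hu, div_le_one hL]; exact hpx
    rw [← hu, hlu]
    have : (u * L) ^ 2 / p * (1 - u) ^ 2 = (L ^ 2 / p) * (u * (1-u))^2 := by ring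
    rw [this]
    have : L / 4 * (u * L / p) = (L ^ 2 / p) * (u / 4) := by ring
    rw [this]
    apply mul_le_mul_of_nonneg_left _ (by positivity)
    have b1 : u * (1 - u) ≤ 1/4 := by nlinarith [sq_nonneg (u - 1/2)]
    have b0 : 0 ≤ u * (1 - u) := mul_nonneg hu0 (by linarith)
    nlinarith
  calc _ ≤ ∑ p ∈ Nat.primesBelow (⌊x⌋₊ + 1), L / 4 * (Real.log p / p) := Finset.sum_le_sum h3
    _ = L / 4 * ∑ p ∈ Nat.primesBelow (⌊x⌋₊ + 1), (Real.log p / p) := by rw [Finset.mul_sum]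
    _ ≤ L / 4 * (2 * L) := by
        apply mul_le_mul_of_nonneg_left _ (by positivity)
        linarith
    _ ≤ L ^ 2 := by nlinarith

lemma aux_count (S : Finset ℕ) (hS : ∀ p ∈ S, p.Prime) (k : ℕ) (f : Fin k → ℕ)
    (hf : f ∈ Fintype.piFinset (fun _ : Fin k => S)) :
    ((Fintype.piFinset (fun _ : Fin k => S)).filter (fun g => ∏ i, g i = ∏ i, f i)).card
      ≤ k.factorial := by
  classical
  have key : ∀ g ∈ (Fintype.piFinset (fun _ : Fin k => S)),
      (List.ofFn g).Perm (∏ i, g i).primeFactorsList := by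
    intro g hg
    rw [Fintype.mem_piFinset] at hg
    apply Nat.primeFactorsList_unique
    · rw [List.prod_ofFn]
    · intro p hp
      rw [List.mem_ofFn] at hp
      obtain ⟨i, rfl⟩ := hp
      exact hS _ (hg i)
  have h := Finset.card_le_card_of_injOn (s := (Fintype.piFinset (fun _ : Fin k => S)).filter
      (fun g => ∏ i, g i = ∏ i, f i)) (t := (List.ofFn f).permutations.toFinset) List.ofFn
    (by
      intro g hg
      rw [Finset.mem_coe, Finset.mem_filter] at hg
      rw [Finset.mem_coe, List.mem_toFinset, List.mem_permutations]
      have := key g hg.1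
      rw [hg.2] at this
      exact this.trans (key f hf).symm)
    (List.ofFn_injective.injOn)
  refine h.trans ((List.toFinset_card_le _).trans ?_)
  rw [List.length_permutations, List.length_ofFn]


lemma aux_mv : ∃ C : ℝ, 0 < C ∧ ∀ (ι : Type) (s : Finset ι) (a : ι → ℂ) (l : ι → ℝ),
    (∀ i ∈ s, ∀ j ∈ s, l i ≠ l j → 1 ≤ |l i - l j|) →
    (∫ t in (0:ℝ)..(1 / (2 * π)), ‖∑ i ∈ s, a i * Complex.exp ((-2 * π * l i * t : ℝ) * Complex.I)‖ ^ 2)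
      ≤ C * ∑ i ∈ s, ∑ j ∈ s, if l i = l j then ‖a i‖ * ‖a j‖ else 0 := by
  let φ : ContDiffBump (0:ℝ) := ⟨1/4, 1/2, by norm_num, by norm_num⟩
  have hφc : Continuous φ := φ.continuous
  have hφcs : HasCompactSupport φ := φ.hasCompactSupport
  have hφint : Integrable φ := hφc.integrable_of_hasCompactSupport hφcs
  have hφpos : 0 < ∫ u, φ u := φ.integral_pos
  have hφ0 : ∀ u, 0 ≤ φ u := fun u => φ.nonneg
  have hφsupp : ∀ u, 1/2 ≤ |u| → φ u = 0 := fun u hu => φ.zero_of_le_dist (by rw [Real.dist_eq, sub_zero]; exact hu)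
  have hsqint : Integrable (fun u => φ u ^ 2) := by
    apply Continuous.integrable_of_hasCompactSupport (by fun_prop)
    exact hφcs.comp_left (g := fun y : ℝ => y ^ 2) (by simp)
  set B := ∫ u, φ u ^ 2 with hB
  have hB0 : 0 ≤ B := integral_nonneg fun u => sq_nonneg _
  set D := ∫ u, φ u with hD
  -- lower bound for transform
  let Φ : ℝ → ℂ := fun t => ∫ u, Complex.exp ((-2 * π * u * t : ℝ) * Complex.I) * (φ u : ℂ)
  have hexpint : ∀ t : ℝ, Integrable (fun u : ℝ => Complex.exp ((-2 * π * u * t : ℝ) * Complex.I) * (φ u : ℂ)) := by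
    intro t
    apply Continuous.integrable_of_hasCompactSupport
    · fun_prop
    · apply HasCompactSupport.mul_left
      exact hφcs.comp_left (g := ((↑) : ℝ → ℂ)) (by simp)
  have hΦ : ∀ t ∈ Set.Icc (0:ℝ) (1 / (2 * π)), D / 2 ≤ ‖Φ t‖ := by
    intro t ht
    refine le_trans ?_ (Complex.re_le_norm _)
    have hre : (Φ t).re = ∫ u, Real.cos (-2 * π * u * t) * φ u := by
      have := integral_re (hexpint t)
      simp only [Φ]
      rw [← RCLike.re_eq_complex_re, ← this]
      congr 1; ext u
      simp only [RCLike.re_eq_complex_re, Complex.re_mul_ofReal, Complex.exp_ofReal_mul_I_re]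
    rw [hre, hD, ← integral_div]
    apply integral_mono (hφint.div_const 2)
    · apply Continuous.integrable_of_hasCompactSupport (by fun_prop)
      exact hφcs.mul_left
    · intro u
      simp only
      by_cases hu : 1/2 ≤ |u|
      · simp [hφsupp u hu]
      · push Not at hu
        have h1 : |(-2 * π * u * t)| ≤ 1/2 := by
          have : |(-2 * π * u * t)| = |u| * (2 * π * t) := by
            have h2 : 0 ≤ 2 * π * t := by have := ht.1; positivity
            rw [show -2 * π * u * t = -(u * (2 * π * t)) by ring, abs_neg, abs_mul, abs_of_nonneg h2]
          rw [this]
          have h3 : 2 * π * t ≤ 1 := by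
            have := ht.2
            rw [le_div_iff₀ (by positivity)] at this
            linarith
          have h2 : 0 ≤ 2 * π * t := by have := ht.1; positivity
          nlinarith [abs_nonneg u]
        have h4 := Real.one_sub_sq_div_two_le_cos (x := -2 * π * u * t)
        have h5 : (-2 * π * u * t) ^ 2 ≤ (1/2) ^ 2 := sq_le_sq' (by linarith [(abs_le.1 h1).1]) (abs_le.1 h1).2
        have := hφ0 u
        nlinarith
  refine ⟨B * (D / 2)⁻¹ ^ 2 + 1, by positivity, ?_⟩
  intro ι s a l hsep
  set Q := ∑ i ∈ s, ∑ j ∈ s, if l i = l j then ‖a i‖ * ‖a j‖ else 0 with hQ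
  have hQ0 : 0 ≤ Q := Finset.sum_nonneg fun i _ => Finset.sum_nonneg fun j _ => by
    split_ifs <;> positivity
  let F : ℝ → ℂ := fun u => ∑ i ∈ s, a i * (φ (u - l i) : ℂ)
  have hFcd : ContDiff ℝ (⊤ : ℕ∞) F := by
    apply ContDiff.sum
    intro i _
    apply contDiff_const.mul
    apply Complex.ofRealCLM.contDiff.comp
    exact φ.contDiff.comp (contDiff_id.sub contDiff_const)
  have hφsh : ∀ c : ℝ, HasCompactSupport (fun u => φ (u - c)) := fun c =>
    hφcs.comp_homeomorph (Homeomorph.subRight c)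
  have hFcs : HasCompactSupport F := by
    have : F = ∑ i ∈ s, fun u => a i * (φ (u - l i) : ℂ) := by ext u; simp [F]
    rw [this]
    classical
    clear this hQ hQ0 Q hsep hFcd F
    induction s using Finset.induction_on with
    | empty => simpa using HasCompactSupport.zero
    | insert i s hi ih =>
      rw [Finset.sum_insert hi]
      refine HasCompactSupport.add ?_ ih
      apply HasCompactSupport.mul_left
      exact (hφsh (l i)).comp_left (g := ((↑) : ℝ → ℂ)) (by simp)
  let G : SchwartzMap ℝ ℂ := hFcs.toSchwartzMap hFcd
  have hGF : ∀ u, G u = F u := fun u => rfl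
  have hpl := SchwartzMap.integral_norm_sq_fourier G
  have hft : ∀ t : ℝ, (FourierTransform.fourier G) t =
      (∑ i ∈ s, a i * Complex.exp ((-2 * π * l i * t : ℝ) * Complex.I)) * Φ t := by
    intro t
    rw [SchwartzMap.fourier_coe, Real.fourier_real_eq_integral_exp_smul]
    simp only [hGF, F, smul_eq_mul, Finset.mul_sum, Finset.sum_mul]
    rw [integral_finsetSum]
    · apply Finset.sum_congr rfl
      intro i _
      simp only [Φ]
      rw [← integral_const_mul, ← integral_sub_right_eq_self (fun u : ℝ =>
        a i * Complex.exp ((-2 * π * l i * t : ℝ) * Complex.I) *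
          (Complex.exp ((-2 * π * u * t : ℝ) * Complex.I) * (φ u : ℂ))) (l i)]
      congr 1; ext u
      have : Complex.exp ((-2 * π * u * t : ℝ) * Complex.I) =
         Complex.exp ((-2 * π * l i * t : ℝ) * Complex.I) * Complex.exp ((-2 * π * (u - l i) * t : ℝ) * Complex.I) := by
        rw [← Complex.exp_add]; congr 1; push_cast; ring
      rw [this]; ring
    · intro i _
      apply Continuous.integrable_of_hasCompactSupport
      · fun_prop
      · apply HasCompactSupport.mul_left
        apply HasCompactSupport.mul_left
        exact (hφsh (l i)).comp_left (g := ((↑) : ℝ → ℂ)) (by simp)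
  -- upper bound
  have hup : ∫ u, ‖G u‖ ^ 2 ≤ B * Q := by
    have hpt : ∀ u, ‖G u‖ ^ 2 ≤ ∑ i ∈ s, ∑ j ∈ s, (if l i = l j then ‖a i‖ * ‖a j‖ else 0) * φ (u - l i) ^ 2 := by
      intro u
      have h1 : ‖G u‖ ≤ ∑ i ∈ s, ‖a i‖ * φ (u - l i) := by
        rw [hGF]
        refine (norm_sum_le _ _).trans (Finset.sum_le_sum fun i _ => ?_)
        rw [norm_mul, Complex.norm_real, Real.norm_of_nonneg (hφ0 _)]
      refine (pow_le_pow_left₀ (norm_nonneg _) h1 2).trans ?_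
      rw [sq, Finset.sum_mul_sum]
      refine Finset.sum_le_sum fun i hi => Finset.sum_le_sum fun j hj => ?_
      split_ifs with h
      · rw [h]; apply le_of_eq; ring
      · have h2 := hsep i hi j hj h
        by_cases h3 : 1/2 ≤ |u - l i|
        · simp [hφsupp _ h3]
        · have h4 : 1/2 ≤ |u - l j| := by
            push Not at h3
            have : |l i - l j| ≤ |u - l j| + |u - l i| := by
              rw [show l i - l j = (u - l j) - (u - l i) by ring]; exact abs_sub _ _
            linarith
          simp [hφsupp _ h4]
    have hi2 : ∀ i, Integrable (fun u => φ (u - l i) ^ 2) := fun i => hsqint.comp_sub_right (l i)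
    have hint : Integrable (fun u => ∑ i ∈ s, ∑ j ∈ s, (if l i = l j then ‖a i‖ * ‖a j‖ else 0) * φ (u - l i) ^ 2) :=
      integrable_finsetSum _ fun i _ => integrable_finsetSum _ fun j _ => (hi2 i).const_mul _
    refine (integral_mono_of_nonneg (ae_of_all _ fun u => by positivity) hint (ae_of_all _ hpt)).trans ?_
    rw [integral_finsetSum _ fun i _ => integrable_finsetSum _ fun j _ => (hi2 i).const_mul _]
    rw [hQ, Finset.mul_sum]
    apply le_of_eq
    refine Finset.sum_congr rfl fun i _ => ?_
    rw [integral_finsetSum _ fun j _ => (hi2 i).const_mul _, Finset.mul_sum]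
    refine Finset.sum_congr rfl fun j _ => ?_
    rw [integral_const_mul, integral_sub_right_eq_self (fun u => φ u ^ 2), mul_comm]
  have hGint : Integrable (fun t => ‖(FourierTransform.fourier G) t‖ ^ 2) := by
    have := (FourierTransform.fourier G : SchwartzMap ℝ ℂ).memLp 2 (μ := volume)
    have := this.integrable_norm_pow (by norm_num)
    simpa using this
  have hpi : (0:ℝ) ≤ 1 / (2 * π) := by positivity
  have hlow : (D / 2) ^ 2 * (∫ t in (0:ℝ)..(1 / (2 * π)), ‖∑ i ∈ s, a i * Complex.exp ((-2 * π * l i * t : ℝ) * Complex.I)‖ ^ 2)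
      ≤ ∫ t, ‖(FourierTransform.fourier G) t‖ ^ 2 := by
    rw [← intervalIntegral.integral_const_mul]
    have h1 : (∫ t in (0:ℝ)..(1 / (2 * π)), (D / 2) ^ 2 * ‖∑ i ∈ s, a i * Complex.exp ((-2 * π * l i * t : ℝ) * Complex.I)‖ ^ 2)
        ≤ ∫ t in (0:ℝ)..(1 / (2 * π)), ‖(FourierTransform.fourier G) t‖ ^ 2 := by
      apply intervalIntegral.integral_mono_on hpi
      · apply Continuous.intervalIntegrable; fun_prop
      · exact hGint.intervalIntegrable
      · intro t ht
        rw [hft, norm_mul, mul_pow, mul_comm]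
        apply mul_le_mul_of_nonneg_left _ (by positivity)
        exact pow_le_pow_left₀ (by positivity) (hΦ t ht) 2
    refine h1.trans ?_
    rw [intervalIntegral.integral_of_le hpi]
    exact setIntegral_le_integral hGint (ae_of_all _ fun u => by positivity)
  rw [hpl] at hlow
  have h2 := hlow.trans hup
  have hD2 : 0 < D / 2 := by positivity
  set I := (∫ t in (0:ℝ)..(1 / (2 * π)), ‖∑ i ∈ s, a i * Complex.exp ((-2 * π * l i * t : ℝ) * Complex.I)‖ ^ 2)
  have h3 : I ≤ B * (D / 2)⁻¹ ^ 2 * Q := by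
    have : B * (D / 2)⁻¹ ^ 2 * Q = B * Q / (D/2)^2 := by field_simp
    rw [this, le_div_iff₀ (by positivity)]
    linarith
  linarith

lemma aux_sep (m n : ℕ) (hm : 0 < m) (hn : 0 < n) (T : ℝ) (hmT : (m:ℝ) ≤ T) (hnT : (n:ℝ) ≤ T)
    (hlt : m < n) : 1 ≤ T * Real.log n - T * Real.log m := by
  have hm' : (0:ℝ) < m := by exact_mod_cast hm
  have hn' : (0:ℝ) < n := by exact_mod_cast hn
  have h1 : Real.log ((m:ℝ) / n) ≤ (m:ℝ) / n - 1 := Real.log_le_sub_one_of_pos (by positivity)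
  rw [Real.log_div hm'.ne' hn'.ne'] at h1
  have h2 : (m:ℝ) + 1 ≤ n := by exact_mod_cast hlt
  have h3 : (m:ℝ) / n - 1 ≤ - (1 / n) := by
    rw [div_sub_one hn'.ne', ← neg_div]
    apply div_le_div_of_nonneg_right _ hn'.le
    linarith
  have h4 : 1 / (n:ℝ) ≤ Real.log n - Real.log m := by linarith
  have h5 : T * (1 / n) ≤ T * (Real.log n - Real.log m) :=
    mul_le_mul_of_nonneg_left h4 (by linarith)
  have h6 : 1 ≤ T * (1 / n) := by rw [mul_one_div, le_div_iff₀ hn']; linarith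
  linarith

lemma aux_first : ∃ C : ℝ, 0 < C ∧ ∀ k : ℕ, ∀ x : ℝ, 2 ≤ x → ∀ T : ℝ, 2 ≤ T → x ^ k ≤ T →
    ∀ α : ℕ → ℝ,
      (∫ t in (0:ℝ)..T, ‖∑ p ∈ Nat.primesBelow (⌊x⌋₊ + 1),
          (α p : ℂ) * Complex.exp ((-(Real.log p * t) : ℝ) * Complex.I)‖ ^ (2 * k)) ≤
        C * (k.factorial : ℝ) * T * (∑ p ∈ Nat.primesBelow (⌊x⌋₊ + 1), α p ^ 2) ^ k := by
  obtain ⟨C, hC, hmv⟩ := aux_mv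
  refine ⟨2 * π * C, by positivity, ?_⟩
  intro k x hx T hT hxT α
  set S := Nat.primesBelow (⌊x⌋₊ + 1) with hS
  have hSp : ∀ p ∈ S, p.Prime := fun p hp => (Nat.mem_primesBelow.1 hp).2
  set P := Fintype.piFinset (fun _ : Fin k => S) with hP
  let N : (Fin k → ℕ) → ℕ := fun f => ∏ i, f i
  let a : (Fin k → ℕ) → ℂ := fun f => ∏ i, (α (f i) : ℂ)
  let l : (Fin k → ℕ) → ℝ := fun f => T * Real.log (N f)
  have hT0 : 0 < T := by linarith
  have hNpos : ∀ f ∈ P, 0 < N f := by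
    intro f hf
    rw [hP, Fintype.mem_piFinset] at hf
    exact Finset.prod_pos fun i _ => (hSp _ (hf i)).pos
  have hNT : ∀ f ∈ P, (N f : ℝ) ≤ T := by
    intro f hf
    rw [hP, Fintype.mem_piFinset] at hf
    refine le_trans ?_ hxT
    simp only [N]
    rw [Nat.cast_prod]
    calc _ ≤ ∏ i : Fin k, x := by
          apply Finset.prod_le_prod (fun i _ => by positivity)
          intro i _
          exact (Nat.cast_le.2 (Nat.lt_succ_iff.1 (Nat.mem_primesBelow.1 (hf i)).1)).trans
            (Nat.floor_le (by linarith))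
      _ = x ^ k := by simp
  have hsep : ∀ f ∈ P, ∀ g ∈ P, N f ≠ N g → 1 ≤ |l f - l g| := by
    intro f hf g hg hne
    rcases lt_or_gt_of_ne hne with h | h
    · rw [abs_sub_comm]
      exact (aux_sep _ _ (hNpos f hf) (hNpos g hg) T (hNT f hf) (hNT g hg) h).trans (le_abs_self _)
    · exact (aux_sep _ _ (hNpos g hg) (hNpos f hf) T (hNT g hg) (hNT f hf) h).trans (le_abs_self _)
  have hl : ∀ f ∈ P, ∀ g ∈ P, l f = l g → N g = N f := by
    intro f hf g hg h
    by_contra hne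
    have := hsep f hf g hg (fun h => hne h.symm)
    rw [h, sub_self, abs_zero] at this
    linarith
  have h1 := hmv _ P a l (fun f hf g hg hne => hsep f hf g hg (fun h => hne (by simp only [l, h])))
  have hpow : ∀ t : ℝ, ‖∑ p ∈ S, (α p : ℂ) * Complex.exp ((-(Real.log p * t) : ℝ) * Complex.I)‖ ^ (2 * k)
      = ‖∑ f ∈ P, a f * Complex.exp ((-(Real.log (N f) * t) : ℝ) * Complex.I)‖ ^ 2 := by
    intro t
    rw [mul_comm 2 k, pow_mul, ← norm_pow, Finset.sum_pow']
    congr 2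
    apply Finset.sum_congr rfl
    intro f hf
    rw [Finset.prod_mul_distrib, ← Complex.exp_sum]
    congr 2
    rw [← Finset.sum_mul, ← Complex.ofReal_sum]
    congr 2
    rw [Fintype.mem_piFinset] at hf
    simp only [N]
    rw [Nat.cast_prod, Real.log_prod, Finset.sum_neg_distrib, Finset.sum_mul]
    intro i _
    exact_mod_cast (hSp _ (hf i)).ne_zero
  have hint : (∫ t in (0:ℝ)..T, ‖∑ p ∈ S, (α p : ℂ) * Complex.exp ((-(Real.log p * t) : ℝ) * Complex.I)‖ ^ (2 * k))
      = 2 * π * T * ∫ t in (0:ℝ)..(1 / (2 * π)),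
        ‖∑ f ∈ P, a f * Complex.exp ((-2 * π * l f * t : ℝ) * Complex.I)‖ ^ 2 := by
    simp only [hpow]
    have h := intervalIntegral.mul_integral_comp_mul_left (a := 0) (b := 1 / (2 * π)) (c := 2 * π * T)
      (f := fun t : ℝ => ‖∑ f ∈ P, a f * Complex.exp ((-(Real.log (N f) * t) : ℝ) * Complex.I)‖ ^ 2)
    rw [mul_zero, show 2 * π * T * (1 / (2 * π)) = T by field_simp] at h
    rw [← h]
    congr 2
    ext t
    congr 4
    ext f
    congr 4
    simp only [l]
    ring
  have hQ : (∑ f ∈ P, ∑ g ∈ P, if l f = l g then ‖a f‖ * ‖a g‖ else 0) ≤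
      k.factorial * (∑ p ∈ S, α p ^ 2) ^ k := by
    have hsum : (∑ p ∈ S, α p ^ 2) ^ k = ∑ f ∈ P, ‖a f‖ ^ 2 := by
      rw [Finset.sum_pow']
      apply Finset.sum_congr rfl
      intro f _
      simp only [a]
      rw [norm_prod, ← Finset.prod_pow]
      apply Finset.prod_congr rfl
      intro i _
      rw [Complex.norm_real, Real.norm_eq_abs, sq_abs]
    have hone : ∀ f ∈ P, (∑ g ∈ P, if l f = l g then ‖a f‖ ^ 2 else 0) ≤ k.factorial * ‖a f‖ ^ 2 := by
      intro f hf
      rw [← Finset.sum_filter, Finset.sum_const, nsmul_eq_mul]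
      apply mul_le_mul_of_nonneg_right _ (by positivity)
      have hc := aux_count S hSp k f hf
      have : (P.filter (fun g => l f = l g)).card ≤ k.factorial := by
        refine le_trans (Finset.card_le_card ?_) hc
        intro g hg
        rw [Finset.mem_filter] at hg ⊢
        exact ⟨hg.1, hl f hf g hg.1 hg.2⟩
      exact_mod_cast this
    have hswap : (∑ f ∈ P, ∑ g ∈ P, if l f = l g then ‖a g‖ ^ 2 else 0) =
        ∑ f ∈ P, ∑ g ∈ P, if l f = l g then ‖a f‖ ^ 2 else 0 := by
      rw [Finset.sum_comm]
      refine Finset.sum_congr rfl fun f _ => Finset.sum_congr rfl fun g _ => ?_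
      simp only [eq_comm]
    have hA : (∑ f ∈ P, ∑ g ∈ P, if l f = l g then ‖a f‖ ^ 2 else 0) ≤
        k.factorial * (∑ p ∈ S, α p ^ 2) ^ k := by
      rw [hsum, Finset.mul_sum]
      exact Finset.sum_le_sum hone
    have hB : 2 * (∑ f ∈ P, ∑ g ∈ P, if l f = l g then ‖a f‖ * ‖a g‖ else 0) ≤
        (∑ f ∈ P, ∑ g ∈ P, if l f = l g then ‖a f‖ ^ 2 else 0) +
        (∑ f ∈ P, ∑ g ∈ P, if l f = l g then ‖a g‖ ^ 2 else 0) := by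
      rw [Finset.mul_sum, ← Finset.sum_add_distrib]
      refine Finset.sum_le_sum fun f _ => ?_
      rw [Finset.mul_sum, ← Finset.sum_add_distrib]
      refine Finset.sum_le_sum fun g _ => ?_
      split_ifs
      · nlinarith [sq_nonneg (‖a f‖ - ‖a g‖)]
      · simp
    rw [hswap] at hB
    linarith
  rw [hint]
  calc _ ≤ 2 * π * T * (C * (k.factorial * (∑ p ∈ S, α p ^ 2) ^ k)) := by
        apply mul_le_mul_of_nonneg_left _ (by positivity)
        exact h1.trans (mul_le_mul_of_nonneg_left hQ hC.le)
    _ = _ := by ring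

/-- **Moment bound for a Dirichlet polynomial over primes** (unconditional). There is a
positive absolute constant `C` such that for every integer `k ≥ 1` and all reals `x ≥ 2`,
`T ≥ 2` with `x^k ≤ T`,
`∫₀^T |Σ_{p≤x} (log p) p^{-1/2-it} (1 - log p/log x)|^{2k} dt
  ≤ C^k k! T (Σ_{p≤x} (log p)²/p (1 - log p/log x)²)^k ≤ C^k k! T (log x)^{2k}`. -/
theorem prime_dirichlet_poly_moment :
    ∃ C : ℝ, 0 < C ∧ ∀ k : ℕ, 1 ≤ k → ∀ x : ℝ, 2 ≤ x → ∀ T : ℝ, 2 ≤ T → x ^ k ≤ T →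
      (∫ t in (0:ℝ)..T, ‖∑ p ∈ Nat.primesBelow (⌊x⌋₊ + 1),
          (Real.log p : ℂ) * (p : ℂ) ^ (-(1/2 : ℂ) - t * Complex.I) *
            ((1 : ℂ) - Real.log p / Real.log x)‖ ^ (2 * k)) ≤
        C ^ k * (k.factorial : ℝ) * T *
          (∑ p ∈ Nat.primesBelow (⌊x⌋₊ + 1),
            (Real.log p) ^ 2 / p * (1 - Real.log p / Real.log x) ^ 2) ^ k ∧
      C ^ k * (k.factorial : ℝ) * T *
          (∑ p ∈ Nat.primesBelow (⌊x⌋₊ + 1),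
            (Real.log p) ^ 2 / p * (1 - Real.log p / Real.log x) ^ 2) ^ k ≤
        C ^ k * (k.factorial : ℝ) * T * Real.log x ^ (2 * k) := by
  obtain ⟨C, hC, h⟩ := aux_first
  refine ⟨C + 1, by positivity, ?_⟩
  intro k hk x hx T hT hxT
  have hs0 : 0 ≤ ∑ p ∈ Nat.primesBelow (⌊x⌋₊ + 1),
            (Real.log p) ^ 2 / p * (1 - Real.log p / Real.log x) ^ 2 :=
    Finset.sum_nonneg fun p _ => by positivity
  have hT0 : 0 ≤ T := by linarith
  constructor
  · have h1 := h k x hx T hT hxT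
      (fun p => Real.log p * (p:ℝ) ^ (-(1/2) : ℝ) * (1 - Real.log p / Real.log x))
    have e1 : ∀ p ∈ Nat.primesBelow (⌊x⌋₊ + 1),
        (Real.log p * (p:ℝ) ^ (-(1/2) : ℝ) * (1 - Real.log p / Real.log x)) ^ 2 =
        (Real.log p) ^ 2 / p * (1 - Real.log p / Real.log x) ^ 2 := by
      intro p hp
      rw [mul_pow, mul_pow, ← Real.rpow_natCast, ← Real.rpow_natCast, ← Real.rpow_mul (by positivity)]
      norm_num [Real.rpow_neg_one]
      left; rw [div_eq_mul_inv]
    rw [Finset.sum_congr rfl e1] at h1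
    have e2 : ∀ t : ℝ, ∀ p ∈ Nat.primesBelow (⌊x⌋₊ + 1),
        (Real.log p : ℂ) * (p : ℂ) ^ (-(1/2 : ℂ) - t * Complex.I) *
            ((1 : ℂ) - Real.log p / Real.log x) =
        ((Real.log p * (p:ℝ) ^ (-(1/2) : ℝ) * (1 - Real.log p / Real.log x) : ℝ) : ℂ) *
          Complex.exp ((-(Real.log p * t) : ℝ) * Complex.I) := by
      intro t p hp
      have hp0 : (p : ℂ) ≠ 0 := by exact_mod_cast (Nat.mem_primesBelow.1 hp).2.ne_zero
      have e3 : (p : ℂ) ^ (-(1/2 : ℂ) - t * Complex.I) =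
          (((p:ℝ) ^ (-(1/2) : ℝ) : ℝ) : ℂ) * Complex.exp ((-(Real.log p * t) : ℝ) * Complex.I) := by
        rw [sub_eq_add_neg, Complex.cpow_add _ _ hp0, Complex.ofReal_cpow (by positivity)]
        congr 1
        · push_cast; rfl
        · rw [Complex.cpow_def_of_ne_zero hp0, Complex.natCast_log.symm]
          congr 1; push_cast; ring
      rw [e3]; push_cast; ring
    have e4 : ∀ t : ℝ, (∑ p ∈ Nat.primesBelow (⌊x⌋₊ + 1),
        (Real.log p : ℂ) * (p : ℂ) ^ (-(1/2 : ℂ) - t * Complex.I) *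
            ((1 : ℂ) - Real.log p / Real.log x)) = _ := fun t => Finset.sum_congr rfl (e2 t)
    simp only [e4]
    refine h1.trans ?_
    apply mul_le_mul_of_nonneg_right _ (by positivity)
    apply mul_le_mul_of_nonneg_right _ hT0
    apply mul_le_mul_of_nonneg_right _ (by positivity)
    calc C ≤ C + 1 := by linarith
      _ ≤ (C + 1) ^ k := le_self_pow₀ (by linarith) (by omega)
  · apply mul_le_mul_of_nonneg_left _ (by positivity)
    rw [pow_mul]
    exact pow_le_pow_left₀ hs0 (aux_second x hx) k
end
end
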